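/- arXiv:math-ph/0302049 — 4 statements merged into one kernel-verified Lean document; each statement's English description precedes it below -/
import Mathlib

section
/- Density formula: let Λ(W) be a regular model set arising from a cut-and-project scheme with lattice L̃ ⊂ ℝ^d × ℝ^m (π₁|_{L̃} injective, π₂(L̃) dense), where W ⊂ ℝ^m is compact with W equal to the closure of its interior and ∂W of Lebesgue measure zero. Then for every a ∈ ℝ^d and u ∈ ℝ^m, (1/vol(B_r(0))) · #(Λ(W+u) ∩ B_r(a)) → vol(W)/|det(L̃)| as r → ∞, and the convergence is uniform in a and u. -/
open MeasureTheory Metric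

open Bornology Filter Module Set Topology
open scoped ENNReal

/-!
The count `#(Λ(W + u) ∩ B_r(a))` is the number of lattice points in the translate of the box
`B_r(0) × W` by `(a, u)`. Averaged over all translates by points of a fundamental domain, the number
of lattice points in `v + S` is the volume of `S` over the covolume. Since the projection to the
internal space is dense, for each `δ > 0` there is an `R` such that every point is within `R`
(physically) and `δ` (internally) of a lattice point; so all translates of `B_r × W` contain at most
as many lattice points as any translate of `B_{r + R} × W_δ`. Comparing with the average, and
approximating `W` from outside by its `δ`-thickenings and from inside by compact sets whose
`δ`-thickening stays in `W`, gives uniform upper and lower bounds; the boundary effect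
`vol B_{r ± R} / vol B_r` tends to `1`.
-/

section TranslateCount

/-- The number of lattice points in the translate `v + S`. Counting in the subtype `L` makes it a
sum of indicators over the group `L`; the value is `⊤` when there are infinitely many. -/
noncomputable def translateCount {V : Type*} [AddCommGroup V] (L : Submodule ℤ V) (S : Set V)
    (v : V) : ℕ∞ :=
  {p : L | (p : V) - v ∈ S}.encard

theorem translateCount_eq_tsum_indicator {V : Type*} [AddCommGroup V] (L : Submodule ℤ V)
    (S : Set V) (v : V) :
    (translateCount L S v : ℝ≥0∞) = ∑' p : L, (-S).indicator 1 (-p +ᵥ v) := by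
  rw [translateCount, ← ENNReal.tsum_set_one, tsum_subtype _ fun _ : L => (1 : ℝ≥0∞)]
  refine tsum_congr fun p => ?_
  have hmem : -p +ᵥ v ∈ -S ↔ (p : V) - v ∈ S := by
    rw [Set.mem_neg, Submodule.vadd_def, vadd_eq_add, Submodule.coe_neg, neg_add_rev, neg_neg,
      neg_add_eq_sub]
  exact indicator_eq_indicator hmem.symm rfl

theorem lintegral_translateCount {V : Type*} [AddCommGroup V] [MeasurableSpace V]
    [MeasurableAdd V] [MeasurableNeg V] {L : Submodule ℤ V} [Countable L] {μ : Measure V}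
    [μ.IsAddLeftInvariant] [μ.IsNegInvariant] {D : Set V} (hD : IsAddFundamentalDomain L D μ)
    {S : Set V} (hS : MeasurableSet S) : ∫⁻ v in D, translateCount L S v ∂μ = μ S := by
  have : MeasurableVAdd L V := inferInstanceAs (MeasurableVAdd L.toAddSubgroup V)
  have : VAddInvariantMeasure L V μ := inferInstanceAs (VAddInvariantMeasure L.toAddSubgroup V μ)
  have hind : Measurable ((-S).indicator (1 : V → ℝ≥0∞)) := measurable_one.indicator hS.neg
  calc ∫⁻ v in D, translateCount L S v ∂μ
      = ∑' p : L, ∫⁻ v in D, (-S).indicator 1 (-p +ᵥ v) ∂μ := by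
        simp_rw [translateCount_eq_tsum_indicator]
        exact lintegral_tsum fun p => (hind.comp (measurable_const_vadd _)).aemeasurable
    _ = ∫⁻ v, (-S).indicator 1 v ∂μ := (hD.lintegral_eq_tsum' _).symm
    _ = μ S := by rw [lintegral_indicator_one hS.neg, Measure.measure_neg]

theorem translateCount_ne_top {V : Type*} [NormedAddCommGroup V] [ProperSpace V]
    (L : Submodule ℤ V) [DiscreteTopology L] {S : Set V} (hS : IsBounded S) (v : V) :
    translateCount L S v ≠ ⊤ := by
  have : DiscreteTopology L.toAddSubgroup := ‹DiscreteTopology L›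
  have hfin : ((· - v) ⁻¹' S ∩ (L : Set V)).Finite :=
    finite_isBounded_inter_isClosed DiscreteTopology.isDiscrete
      ((hS.vadd v).subset fun x hx => ⟨x - v, hx, add_sub_cancel v x⟩)
      (AddSubgroup.isClosed_of_discrete (H := L.toAddSubgroup))
  exact encard_ne_top_iff.2 <|
    (hfin.preimage Subtype.val_injective.injOn).subset fun p hp => ⟨hp, p.2⟩

variable {V : Type*} [NormedAddCommGroup V] [NormedSpace ℝ V] [FiniteDimensional ℝ V]
  (L : Submodule ℤ V) [DiscreteTopology L] [IsZLattice ℝ L]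

theorem exists_forall_exists_mem_norm_sub_le : ∃ R : ℝ, ∀ v : V, ∃ p ∈ L, ‖v - p‖ ≤ R := by
  let b := (Free.chooseBasis ℤ L).ofZLatticeBasis ℝ
  exact ⟨∑ i, ‖b i‖, fun v => ⟨ZSpan.floor b v,
    ((Free.chooseBasis ℤ L).ofZLatticeBasis_span ℝ).le (ZSpan.floor b v).2,
    ZSpan.norm_fract_le b v⟩⟩

variable [MeasurableSpace V] [BorelSpace V] (μ : Measure V) [μ.IsAddHaarMeasure]

theorem exists_isAddFundamentalDomain_measure_eq_covolume :
    ∃ D : Set V, IsAddFundamentalDomain L D μ ∧ μ D = .ofReal (ZLattice.covolume L μ) := by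
  have hD := ZLattice.isAddFundamentalDomain (Free.chooseBasis ℤ L) μ
  refine ⟨_, hD, ?_⟩
  rw [ZLattice.covolume_eq_measure_fundamentalDomain L μ hD,
    ofReal_measureReal (ZSpan.fundamentalDomain_isBounded _).measure_lt_top.ne]

theorem mul_covolume_le_measureReal_of_forall_le {S : Set V} (hS : MeasurableSet S)
    (hSfin : μ S ≠ ⊤) {n : ℕ} (hn : ∀ v, n ≤ translateCount L S v) :
    n * ZLattice.covolume L μ ≤ μ.real S := by
  obtain ⟨D, hD, hDvol⟩ := exists_isAddFundamentalDomain_measure_eq_covolume L μ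
  have h : (n : ℝ≥0∞) * μ D ≤ μ S := by
    rw [← lintegral_translateCount hD hS, ← setLIntegral_const]
    exact lintegral_mono fun v => by simpa using ENat.toENNReal_le.2 (hn v)
  simpa [measureReal_def, hDvol, (ZLattice.covolume_pos L μ).le] using ENNReal.toReal_mono hSfin h

theorem measureReal_le_mul_covolume_of_forall_le {S : Set V} (hS : MeasurableSet S) {n : ℕ}
    (hn : ∀ v, translateCount L S v ≤ n) : μ.real S ≤ n * ZLattice.covolume L μ := by
  obtain ⟨D, hD, hDvol⟩ := exists_isAddFundamentalDomain_measure_eq_covolume L μ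
  have h : μ S ≤ (n : ℝ≥0∞) * μ D := by
    rw [← lintegral_translateCount hD hS, ← setLIntegral_const]
    exact lintegral_mono fun v => by simpa using ENat.toENNReal_le.2 (hn v)
  refine (ENNReal.toReal_mono (by rw [hDvol]; finiteness) h).trans_eq ?_
  simp [hDvol, (ZLattice.covolume_pos L μ).le]

end TranslateCount

section Approximation

theorem tendsto_addHaar_real_closedBall_add_div {E : Type*} [NormedAddCommGroup E]
    [NormedSpace ℝ E] [FiniteDimensional ℝ E] [MeasurableSpace E] [BorelSpace E] (μ : Measure E)
    [μ.IsAddHaarMeasure] (x : E) (R : ℝ) :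
    Tendsto (fun r : ℝ => μ.real (closedBall x (r + R)) / μ.real (closedBall x r))
      atTop (𝓝 1) := by
  have hpow : Tendsto (fun r : ℝ => (1 + R / r) ^ finrank ℝ E) atTop (𝓝 1) := by
    simpa using (((tendsto_const_nhds (x := R)).div_atTop tendsto_id).const_add 1).pow (finrank ℝ E)
  refine hpow.congr' ?_
  filter_upwards [eventually_gt_atTop 0, eventually_ge_atTop (-R)] with r hr hrR
  have hball : μ.real (ball 0 1) ≠ 0 :=
    (ENNReal.toReal_pos (measure_ball_pos μ _ one_pos).ne' measure_ball_lt_top.ne).ne'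
  rw [Measure.addHaar_real_closedBall μ x hr.le,
    Measure.addHaar_real_closedBall μ x (neg_le_iff_add_nonneg.1 hrR),
    mul_div_mul_right _ _ hball, ← div_pow, add_div, div_self hr.ne']

variable {X : Type*} [MeasurableSpace X]

theorem measureReal_closedBall_pos [PseudoMetricSpace X] [ProperSpace X] (μ : Measure X)
    [μ.IsOpenPosMeasure] [IsFiniteMeasureOnCompacts μ] (x : X) {r : ℝ} (hr : 0 < r) :
    0 < μ.real (closedBall x r) :=
  ENNReal.toReal_pos (measure_closedBall_pos μ x hr).ne' measure_closedBall_lt_top.ne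

theorem exists_measureReal_cthickening_lt [PseudoMetricSpace X] [ProperSpace X]
    [OpensMeasurableSpace X] (μ : Measure X) [IsFiniteMeasureOnCompacts μ] {W : Set X}
    (hW : IsBounded W) {b : ℝ} (hb : μ.real (closure W) < b) :
    ∃ δ > 0, μ.real (cthickening δ W) < b := by
  have htendsto : Tendsto (fun δ => μ.real (cthickening δ W)) (𝓝 0) (𝓝 (μ.real (closure W))) :=
    (ENNReal.tendsto_toReal hW.closure.measure_lt_top.ne).comp <|
      tendsto_measure_cthickening ⟨1, one_pos, hW.cthickening.measure_lt_top.ne⟩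
  have hlt : ∀ᶠ δ in 𝓝[>] 0, μ.real (cthickening δ W) < b :=
    nhdsWithin_le_nhds (htendsto.eventually_lt_const hb)
  obtain ⟨δ, hδb, hδ⟩ := (hlt.and self_mem_nhdsWithin).exists
  exact ⟨δ, hδ, hδb⟩

theorem exists_isCompact_cthickening_subset_lt_measureReal [PseudoMetricSpace X]
    (μ : Measure X) [μ.Regular] {U : Set X} (hU : IsOpen U) {b : ℝ} (hb : b < μ.real U) :
    ∃ K, IsCompact K ∧ b < μ.real K ∧ ∃ δ > 0, cthickening δ K ⊆ U := by
  obtain hb0 | hb0 := lt_or_ge b 0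
  · exact ⟨∅, isCompact_empty, by simpa using hb0, 1, one_pos, by simp⟩
  have hUfin : μ U ≠ ⊤ := fun htop => by simp [measureReal_def, htop, hb0.not_gt] at hb
  obtain ⟨K, hKU, hK, hbK⟩ :=
    hU.exists_lt_isCompact ((ENNReal.ofReal_lt_iff_lt_toReal hb0 hUfin).2 hb)
  obtain ⟨δ, hδ, hKδ⟩ := hK.exists_cthickening_subset_open hU hKU
  exact ⟨K, hK, (ENNReal.ofReal_lt_iff_lt_toReal hb0 hK.measure_lt_top.ne).1 hbK, δ, hδ, hKδ⟩

end Approximation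

section CutAndProject

/-- The projection to the physical space `E` of the points of `L ⊆ E × F` whose internal component
lies in the window `W`. For a lattice with injective first projection this is the set `Λ(W)`,
without reference to a star map. -/
def modelSet {E F : Type*} [AddCommGroup E] [AddCommGroup F] (L : Submodule ℤ (E × F))
    (W : Set F) : Set E :=
  {x | ∃ p ∈ L, p.2 ∈ W ∧ p.1 = x}

theorem setOf_star_mem_eq_modelSet {E F : Type*} [AddCommGroup E] [AddCommGroup F]
    {L : Submodule ℤ (E × F)} {star : E → F} (hstar : ∀ p ∈ L, star p.1 = p.2) (W : Set F) :
    {x ∈ Prod.fst '' (L : Set (E × F)) | star x ∈ W} = modelSet L W := by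
  ext x
  constructor
  · rintro ⟨⟨p, hp, rfl⟩, hW⟩
    exact ⟨p, hp, hstar p hp ▸ hW, rfl⟩
  · rintro ⟨p, hp, hW, rfl⟩
    exact ⟨⟨p, hp, rfl⟩, (hstar p hp).symm ▸ hW⟩

section Normed

variable {E F : Type*} [SeminormedAddCommGroup E] [SeminormedAddCommGroup F]
  {L : Submodule ℤ (E × F)}

theorem ncard_modelSet_inter_closedBall (hinj : InjOn Prod.fst (L : Set (E × F))) (W : Set F)
    (a : E) (u : F) (r : ℝ) :
    (modelSet L ((· + u) '' W) ∩ closedBall a r).ncard =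
      (translateCount L (closedBall 0 r ×ˢ W) (a, u)).toNat := by
  have hinj' : Function.Injective fun p : L => (p : E × F).1 := hinj.injective
  rw [translateCount, ncard_def, ← hinj'.encard_image]
  congr 2
  ext x
  constructor
  · rintro ⟨⟨p, hp, ⟨w, hw, hwp⟩, rfl⟩, hpa⟩
    exact ⟨⟨p, hp⟩, ⟨by simpa [dist_eq_norm] using hpa, by simpa [← hwp] using hw⟩, rfl⟩
  · rintro ⟨p, ⟨hpa, hpW⟩, rfl⟩
    exact ⟨⟨p, p.2, ⟨_, hpW, sub_add_cancel _ _⟩, rfl⟩, by simpa [dist_eq_norm] using hpa⟩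

theorem exists_forall_exists_mem_norm_fst_sub_le_norm_snd_sub_le [ProperSpace F] {R₀ : ℝ}
    (hL : ∀ v, ∃ p ∈ L, ‖v - p‖ ≤ R₀) (hdense : Dense (Prod.snd '' (L : Set (E × F))))
    {δ : ℝ} (hδ : 0 < δ) :
    ∃ R : ℝ, ∀ v : E × F, ∃ p ∈ L, ‖v.1 - p.1‖ ≤ R ∧ ‖v.2 - p.2‖ ≤ δ := by
  have hcover : closedBall (0 : F) R₀ ⊆ ⋃ q : L, ball q.1.2 δ := fun y _ => by
    obtain ⟨_, ⟨q, hq, rfl⟩, hyq⟩ := hdense.exists_dist_lt y hδ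
    exact mem_iUnion.2 ⟨⟨q, hq⟩, hyq⟩
  obtain ⟨t, ht⟩ := (isCompact_closedBall (0 : F) R₀).elim_finite_subcover _
    (fun _ => isOpen_ball) hcover
  refine ⟨R₀ + ∑ q ∈ t, ‖q.1.1‖, fun v => ?_⟩
  obtain ⟨p, hp, hvp⟩ := hL v
  have hsnd : v.2 - p.2 ∈ closedBall 0 R₀ :=
    mem_closedBall_zero_iff.2 ((norm_snd_le (v - p)).trans hvp)
  obtain ⟨q, hqt, hq⟩ := mem_iUnion₂.1 (ht hsnd)
  refine ⟨p + q, L.add_mem hp q.2, ?_, ?_⟩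
  · calc ‖v.1 - (p + q).1‖ = ‖(v.1 - p.1) - q.1.1‖ := by rw [Prod.fst_add, sub_sub]
      _ ≤ ‖v.1 - p.1‖ + ‖q.1.1‖ := norm_sub_le _ _
      _ ≤ R₀ + ∑ q ∈ t, ‖q.1.1‖ := add_le_add ((norm_fst_le (v - p)).trans hvp)
          (Finset.single_le_sum (f := fun q : L => ‖q.1.1‖) (fun _ _ => norm_nonneg _) hqt)
  · rw [Prod.snd_add, ← sub_sub, ← dist_eq_norm]
    exact (mem_ball.1 hq).le

theorem translateCount_le_translateCount_cthickening {R δ : ℝ}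
    (hR : ∀ v : E × F, ∃ p ∈ L, ‖v.1 - p.1‖ ≤ R ∧ ‖v.2 - p.2‖ ≤ δ) (r : ℝ) (W : Set F)
    (v w : E × F) :
    translateCount L (closedBall 0 r ×ˢ W) v ≤
      translateCount L (closedBall 0 (r + R) ×ˢ cthickening δ W) w := by
  obtain ⟨q, hq, hqfst, hqsnd⟩ := hR (w - v)
  rw [translateCount, ← (add_left_injective (⟨q, hq⟩ : L)).encard_image]
  refine encard_le_encard ?_
  rintro _ ⟨p, ⟨hpfst, hpsnd⟩, rfl⟩
  have hshift : (p : E × F) + q - w = (p - v) - (w - v - q) := by abel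
  simp only [mem_ofPred_eq, Submodule.coe_add, hshift]
  refine ⟨?_, mem_cthickening_of_dist_le _ _ _ _ hpsnd ?_⟩
  · rw [mem_closedBall_zero_iff] at hpfst ⊢
    exact (norm_sub_le _ _).trans (add_le_add hpfst hqfst)
  · simpa [dist_eq_norm] using hqsnd

end Normed

variable {E F : Type*} [NormedAddCommGroup E] [NormedSpace ℝ E] [FiniteDimensional ℝ E]
  [MeasurableSpace E] [BorelSpace E] (μ : Measure E) [μ.IsAddHaarMeasure]
  [NormedAddCommGroup F] [NormedSpace ℝ F] [FiniteDimensional ℝ F]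
  [MeasurableSpace F] [BorelSpace F] (ν : Measure F) [ν.IsAddHaarMeasure]
  (L : Submodule ℤ (E × F)) [DiscreteTopology L] [IsZLattice ℝ L]

theorem eventually_forall_translateCount_div_lt
    (hdense : Dense (Prod.snd '' (L : Set (E × F)))) {W : Set F} (hW : IsBounded W) {b : ℝ}
    (hb : ν.real (closure W) / ZLattice.covolume L (μ.prod ν) < b) :
    ∀ᶠ r in atTop, ∀ v,
      (translateCount L (closedBall 0 r ×ˢ W) v).toNat / μ.real (closedBall (0 : E) r) < b := by
  have hc := ZLattice.covolume_pos L (μ.prod ν)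
  set c := ZLattice.covolume L (μ.prod ν)
  obtain ⟨δ, hδ, hδb⟩ := exists_measureReal_cthickening_lt ν hW ((div_lt_iff₀ hc).1 hb)
  obtain ⟨R₀, hR₀⟩ := exists_forall_exists_mem_norm_sub_le L
  obtain ⟨R, hR⟩ := exists_forall_exists_mem_norm_fst_sub_le_norm_snd_sub_le hR₀ hdense hδ
  have hlim := (tendsto_addHaar_real_closedBall_add_div μ 0 R).mul_const
    (ν.real (cthickening δ W))
  rw [one_mul] at hlim
  filter_upwards [hlim.eventually_lt_const hδb, eventually_gt_atTop 0] with r hr hr0 v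
  have hV := measureReal_closedBall_pos μ (0 : E) hr0
  have hcount : (translateCount L (closedBall 0 r ×ˢ W) v).toNat * c ≤
      μ.real (closedBall (0 : E) (r + R)) * ν.real (cthickening δ W) := by
    rw [← measureReal_prod_prod]
    refine mul_covolume_le_measureReal_of_forall_le L (μ.prod ν)
      (measurableSet_closedBall.prod isClosed_cthickening.measurableSet)
      (isBounded_closedBall.prod hW.cthickening).measure_lt_top.ne fun w => ?_
    exact (ENat.natCast_toNat_le_self _).trans
      (translateCount_le_translateCount_cthickening hR r W v w)
  rw [div_mul_eq_mul_div, div_lt_iff₀ hV] at hr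
  rw [div_lt_iff₀ hV]
  exact lt_of_mul_lt_mul_right (by linarith) hc.le

theorem eventually_forall_lt_translateCount_div
    (hdense : Dense (Prod.snd '' (L : Set (E × F)))) {W : Set F} (hW : IsBounded W) {b : ℝ}
    (hb : b < ν.real (interior W) / ZLattice.covolume L (μ.prod ν)) :
    ∀ᶠ r in atTop, ∀ v,
      b < (translateCount L (closedBall 0 r ×ˢ W) v).toNat / μ.real (closedBall (0 : E) r) := by
  have hc := ZLattice.covolume_pos L (μ.prod ν)
  set c := ZLattice.covolume L (μ.prod ν)
  obtain ⟨K, hK, hbK, δ, hδ, hKW⟩ :=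
    exists_isCompact_cthickening_subset_lt_measureReal ν isOpen_interior ((lt_div_iff₀ hc).1 hb)
  obtain ⟨R₀, hR₀⟩ := exists_forall_exists_mem_norm_sub_le L
  obtain ⟨R, hR⟩ := exists_forall_exists_mem_norm_fst_sub_le_norm_snd_sub_le hR₀ hdense hδ
  have hlim := (tendsto_addHaar_real_closedBall_add_div μ 0 (-R)).mul_const (ν.real K)
  rw [one_mul] at hlim
  filter_upwards [hlim.eventually_const_lt hbK, eventually_gt_atTop 0] with r hr hr0 v
  have hV := measureReal_closedBall_pos μ (0 : E) hr0
  have hcount : μ.real (closedBall (0 : E) (r + -R)) * ν.real K ≤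
      (translateCount L (closedBall 0 r ×ˢ W) v).toNat * c := by
    rw [← measureReal_prod_prod]
    refine measureReal_le_mul_covolume_of_forall_le L (μ.prod ν)
      (measurableSet_closedBall.prod hK.measurableSet) fun w => ?_
    rw [ENat.natCast_toNat (translateCount_ne_top L (isBounded_closedBall.prod hW) v)]
    refine (translateCount_le_translateCount_cthickening hR (r + -R) K w v).trans
      (encard_le_encard fun p hp => ?_)
    rw [neg_add_cancel_right] at hp
    exact ⟨hp.1, interior_subset (hKW hp.2)⟩
  rw [div_mul_eq_mul_div, lt_div_iff₀ hV] at hr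
  rw [lt_div_iff₀ hV]
  exact lt_of_mul_lt_mul_right (by linarith) hc.le

theorem density_formula_general (hinj : InjOn Prod.fst (L : Set (E × F)))
    (hdense : Dense (Prod.snd '' (L : Set (E × F)))) {W : Set F} (hW : IsBounded W)
    (hfrontier : ν (frontier W) = 0) :
    TendstoUniformly
      (fun (r : ℝ) (v : E × F) => (modelSet L ((· + v.2) '' W) ∩ closedBall v.1 r).ncard /
        μ.real (closedBall (0 : E) r))
      (fun _ => ν.real W / ZLattice.covolume L (μ.prod ν)) atTop := by
  have hclosure : ν.real (closure W) = ν.real W :=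
    measureReal_congr (closure_ae_eq_of_null_frontier hfrontier)
  have hinterior : ν.real (interior W) = ν.real W :=
    measureReal_congr (interior_ae_eq_of_null_frontier hfrontier)
  refine tendstoUniformly_iff.2 fun ε hε => ?_
  filter_upwards [
    eventually_forall_translateCount_div_lt μ ν L hdense hW
      (by rw [hclosure]; exact lt_add_of_pos_right _ hε),
    eventually_forall_lt_translateCount_div μ ν L hdense hW
      (by rw [hinterior]; exact sub_lt_self _ hε)] with r hupper hlower v
  rw [dist_comm, Real.dist_eq, abs_sub_lt_iff, ncard_modelSet_inter_closedBall hinj]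
  exact ⟨by linarith [hupper v], by linarith [hlower v]⟩

end CutAndProject

/-- Density formula: for a regular model set, the normalized point
counts in balls converge to vol(W)/|det L̃|, uniformly in the center `a` and the
window translation `u`. -/
theorem density_formula (d m : ℕ)
    (L : Submodule ℤ (EuclideanSpace ℝ (Fin d) × EuclideanSpace ℝ (Fin m)))
    [DiscreteTopology L] [IsZLattice ℝ L]
    (hinj1 : Set.InjOn Prod.fst (L : Set (EuclideanSpace ℝ (Fin d) × EuclideanSpace ℝ (Fin m))))
    (hdense2 : Dense (Prod.snd '' (L : Set (EuclideanSpace ℝ (Fin d) × EuclideanSpace ℝ (Fin m)))))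
    (star : EuclideanSpace ℝ (Fin d) → EuclideanSpace ℝ (Fin m))
    (hstar : ∀ p ∈ L, star (Prod.fst p) = Prod.snd p)
    (W : Set (EuclideanSpace ℝ (Fin m)))
    (hWne : W.Nonempty) (hWc : IsCompact W)
    (hWreg : W = closure (interior W))
    (hWbd : volume (frontier W) = 0) :
    ∀ ε : ℝ, 0 < ε → ∃ r₀ : ℝ, ∀ r : ℝ, r₀ ≤ r →
      ∀ (a : EuclideanSpace ℝ (Fin d)) (u : EuclideanSpace ℝ (Fin m)),
      |(({x ∈ Prod.fst '' (L : Set (EuclideanSpace ℝ (Fin d) × EuclideanSpace ℝ (Fin m))) |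
            star x ∈ (· + u) '' W} ∩ closedBall a r).ncard : ℝ) /
          (volume (closedBall (0 : EuclideanSpace ℝ (Fin d)) r)).toReal -
        (volume W).toReal / ZLattice.covolume L volume| ≤ ε := by
  intro ε hε
  obtain ⟨r₀, hr₀⟩ := eventually_atTop.1 <| tendstoUniformly_iff.1
    (density_formula_general volume volume L hinj1 hdense2 hWc.isBounded hWbd) ε hε
  refine ⟨r₀, fun r hr a u => ?_⟩
  rw [setOf_star_mem_eq_modelSet hstar, ← Real.dist_eq, dist_comm]
  exact (hr₀ r hr (a, u)).le
end

section
/- Weyl's theorem for regular model sets: let Λ(W) be a regular model set with compact Riemann-measurable window W ⊂ ℝ^m, and let f : ℝ^m → ℂ be continuous with support contained in W. Then for every a ∈ ℝ^d, (1/vol(B_r(0))) ∑_{x ∈ Λ(W) ∩ B_r(a)} f(x*) → (1/|det(L̃)|) ∫_W f(y) dy as r → ∞, uniformly in a. -/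
open MeasureTheory Metric

/-!
Since `L` projects densely to `F`, any fundamental domain of `L` in `E × F` can be cut into
countably many pieces and reassembled by lattice translations into a fundamental domain `D` that is
bounded in the `E`-direction and as thin as desired in the `F`-direction. For a ball `s ⊆ E`, the
integral of `1_s(x) f(y)` over `E × F` is the sum of its integrals over the translates `l + D`, and
each of these is `covolume L` times the value at `l`, up to two errors: the oscillation of `f` at
the scale of the thickness of `D`, and the change of `1_s`, which only affects the translates
meeting a shell of bounded width around the sphere. After division by the volume of the ball, the
first error is small by uniform continuity and the second tends to zero, both independently of the
center of the ball.
-/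

namespace CutAndProject

open Set Filter Topology Function
open scoped Pointwise

section FundamentalDomain

variable {Γ α G : Type*} [AddGroup Γ] [Countable Γ] [AddAction Γ α] [MeasurableSpace α]
  [MeasurableConstVAdd Γ α] {μ : Measure α} [NormedAddCommGroup G] [NormedSpace ℝ G]

lemma exists_measurableSet_preimage_vadd_mem {U : Set α} (hU : MeasurableSet U)
    (hcover : ∀ x, ∃ g : Γ, g +ᵥ x ∈ U) :
    ∃ κ : α → Γ, (∀ g, MeasurableSet (κ ⁻¹' {g})) ∧ ∀ x, κ x +ᵥ x ∈ U := by
  classical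
  obtain ⟨e, he⟩ := exists_surjective_nat Γ
  have hcover' : ∀ x, ∃ n, e n +ᵥ x ∈ U := fun x ↦ by
    obtain ⟨g, hg⟩ := hcover x
    obtain ⟨n, rfl⟩ := he g
    exact ⟨n, hg⟩
  have hfind : Measurable fun x ↦ Nat.find (hcover' x) :=
    measurable_find hcover' fun n ↦ measurable_const_vadd (e n) hU
  exact ⟨fun x ↦ e (Nat.find (hcover' x)),
    fun g ↦ hfind (MeasurableSet.of_discrete (s := e ⁻¹' {g})),
    fun x ↦ Nat.find_spec (hcover' x)⟩

lemma exists_isAddFundamentalDomain_subset [VAddInvariantMeasure Γ α μ] {s U : Set α}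
    (hs : IsAddFundamentalDomain Γ s μ) (hU : MeasurableSet U) (hcover : ∀ x, ∃ g : Γ, g +ᵥ x ∈ U) :
    ∃ t ⊆ U, IsAddFundamentalDomain Γ t μ := by
  obtain ⟨κ, hκ, hκU⟩ := exists_measurableSet_preimage_vadd_mem hU hcover
  refine ⟨⋃ k, k +ᵥ (s ∩ κ ⁻¹' {k}), iUnion_subset ?_, ?_, ?_, fun g h hgh ↦ ?_⟩
  · rintro _ _ ⟨x, ⟨-, rfl⟩, rfl⟩
    exact hκU x
  · exact .iUnion fun k ↦ (hs.nullMeasurableSet.inter (hκ k).nullMeasurableSet).vadd k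
  · filter_upwards [hs.ae_covers] with x ⟨g, hg⟩
    refine ⟨κ (g +ᵥ x) + g, mem_iUnion.2 ⟨κ (g +ᵥ x), ?_⟩⟩
    rw [add_vadd]
    exact vadd_mem_vadd_set ⟨hg, rfl⟩
  · simp only [Function.onFun, vadd_set_iUnion, ← add_vadd, AEDisjoint.iUnion_left_iff,
      AEDisjoint.iUnion_right_iff]
    intro k j
    rcases eq_or_ne (g + j) (h + k) with heq | hne
    · have hjk : j ≠ k := by
        rintro rfl
        exact hgh (add_right_cancel heq)
      rw [heq]
      exact (disjoint_vadd_set.2 <| ((disjoint_singleton.2 hjk).preimage κ).mono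
        inter_subset_right inter_subset_right).aedisjoint
    · exact (hs.aedisjoint hne).mono (vadd_set_mono inter_subset_left)
        (vadd_set_mono inter_subset_left)

lemma hasSum_setIntegral_vadd [VAddInvariantMeasure Γ α μ] {D : Set α}
    (hD : IsAddFundamentalDomain Γ D μ) {φ : α → G} (hφ : Integrable φ μ) :
    HasSum (fun g : Γ ↦ ∫ x in D, φ (g +ᵥ x) ∂μ) (∫ x, φ x ∂μ) := by
  have htranslate (g : Γ) : ∫ x in g +ᵥ D, φ x ∂μ = ∫ x in D, φ (g +ᵥ x) ∂μ :=
    (measurePreserving_vadd g μ).setIntegral_image_emb (measurableEmbedding_const_vadd g) _ _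
  simpa only [htranslate, setIntegral_univ, setIntegral_congr_set hD.iUnion_vadd_ae_eq] using
    hasSum_integral_iUnion_ae (fun g ↦ hD.nullMeasurableSet_vadd g) hD.aedisjoint hφ.integrableOn

lemma norm_integral_sub_smul_tsum_le [CompleteSpace G] [VAddInvariantMeasure Γ α μ] {D : Set α}
    (hD : IsAddFundamentalDomain Γ D μ) (hDfin : μ D ≠ ⊤) {φ : α → G} (hφ : Integrable φ μ)
    {H : α → ℝ} (hH : Integrable H μ) {c : Γ → G}
    (hc : ∀ g, ∀ x ∈ D, ‖φ (g +ᵥ x) - c g‖ ≤ H (g +ᵥ x)) :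
    ‖∫ x, φ x ∂μ - μ.real D • ∑' g, c g‖ ≤ ∫ x, H x ∂μ := by
  have hint {ψ : α → G} (hψ : Integrable ψ μ) (g : Γ) : IntegrableOn (fun x ↦ ψ (g +ᵥ x)) D μ :=
    ((measurePreserving_vadd g μ).integrable_comp_of_integrable hψ).integrableOn
  have hHsum := hasSum_setIntegral_vadd hD hH
  have hφsum := hasSum_setIntegral_vadd hD hφ
  have hbound (g : Γ) : ‖∫ x in D, φ (g +ᵥ x) ∂μ - μ.real D • c g‖ ≤ ∫ x in D, H (g +ᵥ x) ∂μ := by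
    rw [← setIntegral_const, ← integral_sub (hint hφ g) (integrableOn_const hDfin)]
    refine norm_integral_le_of_norm_le
      ((measurePreserving_vadd g μ).integrable_comp_of_integrable hH).integrableOn ?_
    filter_upwards [ae_restrict_mem₀ hD.nullMeasurableSet] with x hx using hc g x hx
  have hdiff := hHsum.summable.of_norm_bounded hbound
  have hcsum : Summable fun g ↦ μ.real D • c g := by simpa using hφsum.summable.sub hdiff
  rw [← hφsum.tsum_eq, ← tsum_const_smul'', ← hφsum.summable.tsum_sub hcsum]
  exact tsum_of_norm_bounded hHsum hbound

end FundamentalDomain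

section ThinDomain

instance {V : Type*} [AddCommGroup V] [MeasurableSpace V] [MeasurableAdd V] (L : Submodule ℤ V) :
    MeasurableConstVAdd L V :=
  inferInstanceAs (MeasurableConstVAdd L.toAddSubgroup V)

instance {V : Type*} [AddCommGroup V] [MeasurableSpace V] (L : Submodule ℤ V) (μ : Measure V)
    [μ.IsAddLeftInvariant] : VAddInvariantMeasure L V μ :=
  inferInstanceAs (VAddInvariantMeasure L.toAddSubgroup V μ)

variable {V E F : Type*} [NormedAddCommGroup V] [NormedSpace ℝ V] [FiniteDimensional ℝ V]
  [NormedAddCommGroup E] [NormedSpace ℝ E] [FiniteDimensional ℝ E]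
  [NormedAddCommGroup F] [NormedSpace ℝ F] [FiniteDimensional ℝ F]

lemma exists_forall_norm_add_le (L : Submodule ℤ V) [DiscreteTopology L] [IsZLattice ℝ L] :
    ∃ R : ℝ, ∀ x : V, ∃ l : L, ‖(l : V) + x‖ ≤ R := by
  let b := (Module.Free.chooseBasis ℤ L).ofZLatticeBasis ℝ
  have hb : Submodule.span ℤ (range b) = L :=
    Module.Basis.ofZLatticeBasis_span ℝ L _
  refine ⟨∑ i, ‖b i‖, fun x ↦ ⟨-⟨ZSpan.floor b x, hb.le (ZSpan.floor b x).2⟩, ?_⟩⟩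
  simpa [ZSpan.fract_apply, neg_add_eq_sub] using ZSpan.norm_fract_le b x

lemma exists_forall_add_mem_closedBall_prod_ball {L : Submodule ℤ (E × F)} [DiscreteTopology L]
    [IsZLattice ℝ L] (hdense : Dense (Prod.snd '' (L : Set (E × F)))) {δ : ℝ} (hδ : 0 < δ) :
    ∃ C : ℝ, 0 ≤ C ∧
      ∀ x : E × F, ∃ l : L, (l : E × F) + x ∈ closedBall (0 : E) C ×ˢ ball (0 : F) δ := by
  obtain ⟨R, hR⟩ := exists_forall_norm_add_le L
  let A (n : ℕ) : Set (E × F) := ⋃ l : L, {x | (l : E × F) + x ∈ ball (0 : E) n ×ˢ ball (0 : F) δ}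
  have hAopen (n : ℕ) : IsOpen (A n) :=
    isOpen_iUnion fun l ↦ (isOpen_ball.prod isOpen_ball).preimage (continuous_const_add _)
  have hAmono : Monotone A := fun m n hmn ↦ iUnion_mono fun l x hx ↦
    ⟨ball_subset_ball (Nat.cast_le.2 hmn) hx.1, hx.2⟩
  have hAcover (x : E × F) : x ∈ ⋃ n, A n := by
    obtain ⟨_, ⟨l, hl, rfl⟩, hlx⟩ := hdense.exists_dist_lt (-x.2) hδ
    obtain ⟨n, hn⟩ := exists_nat_gt ‖l.1 + x.1‖
    refine mem_iUnion.2 ⟨n, mem_iUnion.2 ⟨⟨l, hl⟩, ?_, ?_⟩⟩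
    · simpa using hn
    · rw [dist_comm, dist_eq_norm, sub_neg_eq_add] at hlx
      exact mem_ball_zero_iff.2 hlx
  obtain ⟨n, hn⟩ := (isCompact_closedBall (0 : E × F) R).elim_directed_cover A hAopen
    (fun x _ ↦ hAcover x) hAmono.directed_le
  refine ⟨n, n.cast_nonneg, fun x ↦ ?_⟩
  obtain ⟨k, hk⟩ := hR x
  obtain ⟨l, hl⟩ := mem_iUnion.1 (hn (mem_closedBall_zero_iff.2 hk))
  refine ⟨l + k, ?_⟩
  rw [Submodule.coe_add, add_assoc]
  exact prod_mono_left ball_subset_closedBall hl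

variable [MeasurableSpace E] [BorelSpace E] [MeasurableSpace F] [BorelSpace F]

lemma exists_isAddFundamentalDomain_subset_closedBall_prod_ball {L : Submodule ℤ (E × F)}
    [DiscreteTopology L] [IsZLattice ℝ L] (hdense : Dense (Prod.snd '' (L : Set (E × F))))
    (μ : Measure (E × F)) [μ.IsAddHaarMeasure] {δ : ℝ} (hδ : 0 < δ) :
    ∃ C : ℝ, 0 ≤ C ∧ ∃ D ⊆ closedBall (0 : E) C ×ˢ ball (0 : F) δ,
      IsAddFundamentalDomain L D μ := by
  obtain ⟨C, hC, hcover⟩ := exists_forall_add_mem_closedBall_prod_ball hdense hδ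
  exact ⟨C, hC, exists_isAddFundamentalDomain_subset
    (ZLattice.isAddFundamentalDomain (Module.Free.chooseBasis ℤ L) μ)
    (measurableSet_closedBall.prod measurableSet_ball) hcover⟩

end ThinDomain

section Averages

variable {E F G : Type*} [NormedAddCommGroup G]

lemma norm_indicator_smul_sub_le [NormedSpace ℝ G] {s t : Set E} {K : Set F} {f : F → G}
    {η M : ℝ} {x x' : E} {y y' : F} (hst : x ∉ t → (x ∈ s ↔ x' ∈ s))
    (hη : ‖f y - f y'‖ ≤ K.indicator (fun _ ↦ η) y) (hM : ‖f y'‖ ≤ K.indicator (fun _ ↦ M) y) :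
    ‖s.indicator (1 : E → ℝ) x • f y - s.indicator (1 : E → ℝ) x' • f y'‖ ≤
      (s.indicator (fun _ ↦ η) x + t.indicator (fun _ ↦ M) x) *
        K.indicator (1 : F → ℝ) y := by
  have hsplit : s.indicator (1 : E → ℝ) x • f y - s.indicator (1 : E → ℝ) x' • f y' =
      s.indicator (1 : E → ℝ) x • (f y - f y') +
        (s.indicator (1 : E → ℝ) x - s.indicator (1 : E → ℝ) x') • f y' := by module
  have hchange : ‖s.indicator (1 : E → ℝ) x - s.indicator (1 : E → ℝ) x'‖ ≤
      t.indicator (1 : E → ℝ) x := by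
    by_cases hx : x ∈ s <;> by_cases hx' : x' ∈ s <;> by_cases ht : x ∈ t <;> simp_all
  calc
    _ ≤ ‖s.indicator (1 : E → ℝ) x‖ * ‖f y - f y'‖ +
        ‖s.indicator (1 : E → ℝ) x - s.indicator (1 : E → ℝ) x'‖ * ‖f y'‖ := by
      rw [hsplit, ← norm_smul, ← norm_smul]
      exact norm_add_le _ _
    _ ≤ s.indicator (1 : E → ℝ) x * K.indicator (fun _ ↦ η) y +
        t.indicator (1 : E → ℝ) x * K.indicator (fun _ ↦ M) y := by
      have hpos (A : Set E) : 0 ≤ A.indicator (1 : E → ℝ) x :=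
        indicator_nonneg (fun _ _ ↦ zero_le_one) x
      rw [Real.norm_of_nonneg (hpos s)]
      gcongr
      · exact hpos s
      · exact hpos t
    _ = _ := by
      by_cases hs : x ∈ s <;> by_cases ht : x ∈ t <;> by_cases hK : y ∈ K <;> simp [hs, ht, hK]

lemma exists_norm_sub_le_indicator_cthickening [PseudoMetricSpace F] {f : F → G}
    (hf : Continuous f) (hc : HasCompactSupport f) {M : ℝ} (hM : ∀ y, ‖f y‖ ≤ M)
    {η : ℝ} (hη : 0 < η) :
    ∃ δ > 0, ∀ y z, dist y z < δ →
      ‖f y - f z‖ ≤ (cthickening 1 (tsupport f)).indicator (fun _ ↦ η) y ∧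
      ‖f z‖ ≤ (cthickening 1 (tsupport f)).indicator (fun _ ↦ M) y := by
  obtain ⟨δ, hδ, hfδ⟩ :=
    Metric.uniformContinuous_iff.1 (hc.uniformContinuous_of_continuous hf) η hη
  refine ⟨min δ 1, lt_min hδ one_pos, fun y z hyz ↦ ?_⟩
  by_cases hy : y ∈ cthickening 1 (tsupport f)
  · simp only [indicator_of_mem hy]
    exact ⟨dist_eq_norm (f y) (f z) ▸ (hfδ (hyz.trans_le (min_le_left _ _))).le, hM z⟩
  · have hfy : f y = 0 :=
      image_eq_zero_of_notMem_tsupport fun h ↦ hy (self_subset_cthickening _ h)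
    have hfz : f z = 0 := image_eq_zero_of_notMem_tsupport fun h ↦
      hy (mem_cthickening_of_dist_le y z 1 _ h (hyz.le.trans (min_le_right _ _)))
    simp [hy, hfy, hfz]

lemma mem_closedBall_iff_of_notMem_sdiff [PseudoMetricSpace E] {a x z : E} {r C : ℝ}
    (hxz : dist x z ≤ C) (hx : x ∉ closedBall a (r + C) \ closedBall a (r - C)) :
    x ∈ closedBall a r ↔ z ∈ closedBall a r := by
  simp only [Set.mem_sdiff, mem_closedBall, not_and, not_not] at hx ⊢
  have hx' := dist_triangle x z a
  have hz' := dist_triangle_left z a x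
  have hC := dist_nonneg.trans hxz
  constructor <;> intro h <;> linarith [hx (by linarith [hC])]

lemma tendsto_measureReal_closedBall_add_div [NormedAddCommGroup E] [NormedSpace ℝ E]
    [FiniteDimensional ℝ E] [MeasurableSpace E] [BorelSpace E] (μ : Measure E)
    [μ.IsAddHaarMeasure] (c : ℝ) :
    Tendsto (fun r ↦ μ.real (closedBall (0 : E) (r + c)) / μ.real (closedBall (0 : E) r))
      atTop (𝓝 1) := by
  have hone : μ.real (closedBall (0 : E) 1) ≠ 0 :=
    (measureReal_ne_zero_iff measure_closedBall_lt_top.ne).2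
      (measure_closedBall_pos μ _ one_pos).ne'
  have hratio : Tendsto (fun r : ℝ ↦ (1 + c / r) ^ Module.finrank ℝ E) atTop (𝓝 1) := by
    simpa using ((tendsto_const_nhds (x := c)).div_atTop tendsto_id |>.const_add 1).pow
      (Module.finrank ℝ E)
  refine hratio.congr' ?_
  filter_upwards [eventually_gt_atTop 0, eventually_ge_atTop (-c)] with r hr hrc
  rw [Measure.addHaar_real_closedBall' μ 0 (by linarith),
    Measure.addHaar_real_closedBall' μ 0 hr.le, mul_div_mul_right _ _ hone, ← div_pow,
    add_div, div_self hr.ne']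

lemma measureReal_closedBall_add_sdiff_closedBall_sub [NormedAddCommGroup E] [NormedSpace ℝ E]
    [FiniteDimensional ℝ E] [MeasurableSpace E] [BorelSpace E] (μ : Measure E)
    [μ.IsAddHaarMeasure] (a : E) (r : ℝ) {C : ℝ} (hC : 0 ≤ C) :
    μ.real (closedBall a (r + C) \ closedBall a (r - C)) =
      μ.real (closedBall (0 : E) (r + C)) - μ.real (closedBall (0 : E) (r - C)) := by
  rw [measureReal_sdiff (closedBall_subset_closedBall (by linarith [hC])) measurableSet_closedBall
    measure_closedBall_lt_top.ne, Measure.addHaar_real_closedBall_center μ a (r + C),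
    Measure.addHaar_real_closedBall_center μ a (r - C)]

variable [NormedAddCommGroup E] [NormedSpace ℝ E] [FiniteDimensional ℝ E] [MeasurableSpace E]
  [BorelSpace E] [NormedAddCommGroup F] [NormedSpace ℝ F] [FiniteDimensional ℝ F]
  [MeasurableSpace F] [BorelSpace F] [NormedSpace ℝ G] [CompleteSpace G] {μ : Measure E}
  [μ.IsAddHaarMeasure] {ν : Measure F} [ν.IsAddHaarMeasure] {L : Submodule ℤ (E × F)}
  [DiscreteTopology L] [IsZLattice ℝ L]

lemma norm_smul_integral_sub_covolume_smul_tsum_le {D : Set (E × F)} {C δ : ℝ}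
    (hD : IsAddFundamentalDomain L D (μ.prod ν))
    (hDsub : D ⊆ closedBall (0 : E) C ×ˢ ball (0 : F) δ)
    {s t : Set E} (hs : MeasurableSet s) (ht : MeasurableSet t) (hsfin : μ s ≠ ⊤) (htfin : μ t ≠ ⊤)
    (hst : ∀ x z, dist x z ≤ C → x ∉ t → (x ∈ s ↔ z ∈ s))
    {K : Set F} (hK : MeasurableSet K) (hKfin : ν K ≠ ⊤) {f : F → G} (hf : Integrable f ν)
    {η M : ℝ} (hfK : ∀ y z, dist y z < δ →
      ‖f y - f z‖ ≤ K.indicator (fun _ ↦ η) y ∧ ‖f z‖ ≤ K.indicator (fun _ ↦ M) y) :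
    ‖μ.real s • ∫ y, f y ∂ν - ZLattice.covolume L (μ.prod ν) •
        ∑' l : L, s.indicator (1 : E → ℝ) (l : E × F).1 • f (l : E × F).2‖ ≤
      (μ.real s * η + μ.real t * M) * ν.real K := by
  have hDfin : μ.prod ν D ≠ ⊤ :=
    ((isBounded_closedBall.prod isBounded_ball).subset hDsub).measure_lt_top.ne
  have hint {A : Set E} (hA : MeasurableSet A) (hAfin : μ A ≠ ⊤) (c : ℝ) :
      Integrable (A.indicator fun _ ↦ c) μ :=
    (integrable_indicator_iff hA).2 (integrableOn_const hAfin)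
  have hsint : Integrable (s.indicator (1 : E → ℝ)) μ := hint hs hsfin 1
  have hKint : Integrable (K.indicator (1 : F → ℝ)) ν :=
    (integrable_indicator_iff hK).2 (integrableOn_const hKfin)
  have hcompare := norm_integral_sub_smul_tsum_le hD hDfin (hsint.smul_prod hf)
    (((hint hs hsfin η).add (hint ht htfin M)).mul_prod hKint)
    (c := fun l ↦ s.indicator (1 : E → ℝ) (l : E × F).1 • f (l : E × F).2) fun l u hu ↦ by
      have hu1 : dist (l + u : E × F).1 (l : E × F).1 ≤ C := by simpa using (hDsub hu).1
      have hu2 : dist (l + u : E × F).2 (l : E × F).2 < δ := by simpa using (hDsub hu).2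
      exact norm_indicator_smul_sub_le (hst _ _ hu1) (hfK _ _ hu2).1 (hfK _ _ hu2).2
  rw [integral_prod_smul, integral_indicator_one hs, integral_prod_mul, integral_indicator_one hK,
    integral_add' (hint hs hsfin η) (hint ht htfin M), integral_indicator_const _ hs,
    integral_indicator_const _ ht, ← ZLattice.covolume_eq_measure_fundamentalDomain L _ hD]
    at hcompare
  exact hcompare

end Averages

section Equidistribution

variable {E F G : Type*} [NormedAddCommGroup E] [NormedSpace ℝ E] [FiniteDimensional ℝ E]
  [MeasurableSpace E] [BorelSpace E] [NormedAddCommGroup F] [NormedSpace ℝ F]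
  [FiniteDimensional ℝ F] [MeasurableSpace F] [BorelSpace F] [NormedAddCommGroup G]
  [NormedSpace ℝ G]

lemma dist_inv_smul_inv_smul {v c : ℝ} (hv : 0 < v) (hc : 0 < c) (x y : G) :
    dist (c⁻¹ • x) (v⁻¹ • y) = ‖v • x - c • y‖ / (v * c) := by
  have hscale : c⁻¹ • x - v⁻¹ • y = (v * c)⁻¹ • (v • x - c • y) := by
    rw [smul_sub, smul_smul, smul_smul]
    congr 2 <;> field_simp
  rw [dist_eq_norm, hscale, norm_smul, Real.norm_of_nonneg (by positivity), inv_mul_eq_div]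

theorem tendstoUniformly_tsum_indicator_closedBall_smul [CompleteSpace G] (μ : Measure E)
    [μ.IsAddHaarMeasure] (ν : Measure F) [ν.IsAddHaarMeasure] {L : Submodule ℤ (E × F)}
    [DiscreteTopology L] [IsZLattice ℝ L] (hdense : Dense (Prod.snd '' (L : Set (E × F))))
    {f : F → G} (hf : Continuous f) (hc : HasCompactSupport f) :
    TendstoUniformly
      (fun r a ↦ (μ.real (closedBall (0 : E) r))⁻¹ •
        ∑' l : L, (closedBall a r).indicator (1 : E → ℝ) (l : E × F).1 • f (l : E × F).2)
      (fun _ ↦ (ZLattice.covolume L (μ.prod ν))⁻¹ • ∫ y, f y ∂ν) atTop := by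
  rw [Metric.tendstoUniformly_iff]
  intro ε hε
  obtain ⟨M, hM⟩ := hc.exists_bound_of_continuous hf
  let K := cthickening 1 (tsupport f)
  have hKfin : ν K ≠ ⊤ := hc.isCompact.cthickening.measure_ne_top
  have hcov : 0 < ZLattice.covolume L (μ.prod ν) := ZLattice.covolume_pos L _
  obtain ⟨η, hη, hηε⟩ : ∃ η > 0, ν.real K * η < ε * ZLattice.covolume L (μ.prod ν) :=
    exists_pos_mul_lt (by positivity) _
  obtain ⟨δ, hδ, hfδ⟩ := exists_norm_sub_le_indicator_cthickening hf hc hM hη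
  obtain ⟨C, hC, D, hDsub, hD⟩ :=
    exists_isAddFundamentalDomain_subset_closedBall_prod_ball hdense (μ.prod ν) hδ
  let v (r : ℝ) := μ.real (closedBall (0 : E) r)
  have hlim : Tendsto (fun r ↦ (η + (v (r + C) / v r - v (r - C) / v r) * M) * ν.real K) atTop
      (𝓝 (ν.real K * η)) := by
    simpa [mul_comm, sub_eq_add_neg] using ((((tendsto_measureReal_closedBall_add_div μ C).sub
      (tendsto_measureReal_closedBall_add_div μ (-C))).mul_const M).const_add η).mul_const
        (ν.real K)
  filter_upwards [hlim.eventually_lt_const hηε, eventually_gt_atTop 0] with r hr hr0 a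
  have hv : 0 < v r :=
    ENNReal.toReal_pos (measure_closedBall_pos μ _ hr0).ne' measure_closedBall_lt_top.ne
  have hbound := norm_smul_integral_sub_covolume_smul_tsum_le hD hDsub measurableSet_closedBall
    (measurableSet_closedBall.diff measurableSet_closedBall) measure_closedBall_lt_top.ne
    (measure_ne_top_of_subset sdiff_subset measure_closedBall_lt_top.ne)
    (fun x z ↦ mem_closedBall_iff_of_notMem_sdiff (a := a) (r := r))
    isClosed_cthickening.measurableSet hKfin (hf.integrable_of_hasCompactSupport hc) hfδ
  rw [measureReal_closedBall_add_sdiff_closedBall_sub μ a r hC,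
    Measure.addHaar_real_closedBall_center] at hbound
  rw [dist_inv_smul_inv_smul hv hcov, div_lt_iff₀ (by positivity)]
  calc
    _ ≤ (v r * η + (v (r + C) - v (r - C)) * M) * ν.real K := hbound
    _ = v r * ((η + (v (r + C) / v r - v (r - C) / v r) * M) * ν.real K) := by field_simp
    _ < v r * (ε * ZLattice.covolume L (μ.prod ν)) := by gcongr
    _ = ε * (v r * ZLattice.covolume L (μ.prod ν)) := by ring

end Equidistribution

section ModelSet

variable {E F G : Type*} [AddCommGroup E] [AddCommGroup F]

/-- The model set `Λ(W)` of the lattice `L ⊆ E × F` with window `W`. The star map is given as a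
total function, of which only the values on the projection of `L` to `E` matter. -/
def modelSet (L : Submodule ℤ (E × F)) (star : E → F) (W : Set F) : Set E :=
  {x ∈ Prod.fst '' (L : Set (E × F)) | star x ∈ W}

lemma tsum_modelSet_inter [AddCommGroup G] [Module ℝ G] [TopologicalSpace G]
    {L : Submodule ℤ (E × F)} {star : E → F}
    (hstar : ∀ p ∈ L, star p.1 = p.2) {W : Set F} {f : F → G} (hsupp : support f ⊆ W)
    (s : Set E) :
    ∑' x : (modelSet L star W ∩ s : Set E), f (star x) =
      ∑' l : L, s.indicator (1 : E → ℝ) (l : E × F).1 • f (l : E × F).2 := by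
  have hinj : Injective fun l : L ↦ (l : E × F).1 := fun l l' hl ↦ Subtype.ext <|
    Prod.ext hl <| by rw [← hstar l l.2, ← hstar l' l'.2]; exact congrArg star hl
  rw [tsum_subtype _ fun x ↦ f (star x), ← hinj.tsum_eq]
  · refine tsum_congr fun l ↦ ?_
    by_cases hl : f (l : E × F).2 = 0
    · simp [indicator, hstar l l.2, hl]
    · have hmem : (l : E × F).1 ∈ modelSet L star W :=
        ⟨⟨l, l.2, rfl⟩, (hstar l l.2).symm ▸ hsupp hl⟩
      by_cases hls : (l : E × F).1 ∈ s
      · rw [indicator_of_mem (mem_inter hmem hls), indicator_of_mem hls, Pi.one_apply, one_smul,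
          hstar l l.2]
      · rw [indicator_of_notMem fun h ↦ hls h.2, indicator_of_notMem hls, zero_smul]
  · intro x hx
    obtain ⟨⟨⟨p, hp, rfl⟩, -⟩, -⟩ := mem_of_indicator_ne_zero hx
    exact ⟨⟨p, hp⟩, rfl⟩

end ModelSet

end CutAndProject

open CutAndProject in
theorem weyl_regular_model_set_general {E F G : Type*}
    [NormedAddCommGroup E] [NormedSpace ℝ E] [FiniteDimensional ℝ E] [MeasurableSpace E]
    [BorelSpace E] [NormedAddCommGroup F] [NormedSpace ℝ F] [FiniteDimensional ℝ F]
    [MeasurableSpace F] [BorelSpace F] [NormedAddCommGroup G] [NormedSpace ℝ G] [CompleteSpace G]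
    (μ : Measure E) [μ.IsAddHaarMeasure] (ν : Measure F) [ν.IsAddHaarMeasure]
    {L : Submodule ℤ (E × F)} [DiscreteTopology L] [IsZLattice ℝ L]
    (hdense : Dense (Prod.snd '' (L : Set (E × F)))) {star : E → F}
    (hstar : ∀ p ∈ L, star p.1 = p.2) {W : Set F} {f : F → G} (hf : Continuous f)
    (hc : HasCompactSupport f) (hsupp : Function.support f ⊆ W) :
    TendstoUniformly
      (fun r a ↦ (μ.real (closedBall (0 : E) r))⁻¹ •
        ∑' x : (modelSet L star W ∩ closedBall a r : Set E), f (star x))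
      (fun _ ↦ (ZLattice.covolume L (μ.prod ν))⁻¹ • ∫ y in W, f y ∂ν) Filter.atTop := by
  simp only [tsum_modelSet_inter hstar hsupp, setIntegral_eq_integral_of_forall_compl_eq_zero
    fun y hy ↦ Function.notMem_support.1 (mt (@hsupp y) hy)]
  exact tendstoUniformly_tsum_indicator_closedBall_smul μ ν hdense hf hc

/-- Weyl's theorem for regular model sets: averages of f(x*) over the
model set points in balls converge to the normalized integral of f over the window,
uniformly in the ball center `a`. -/
theorem weyl_regular_model_set (d m : ℕ)
    (L : Submodule ℤ (EuclideanSpace ℝ (Fin d) × EuclideanSpace ℝ (Fin m)))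
    [DiscreteTopology L] [IsZLattice ℝ L]
    (hinj1 : Set.InjOn Prod.fst (L : Set (EuclideanSpace ℝ (Fin d) × EuclideanSpace ℝ (Fin m))))
    (hdense2 : Dense (Prod.snd '' (L : Set (EuclideanSpace ℝ (Fin d) × EuclideanSpace ℝ (Fin m)))))
    (star : EuclideanSpace ℝ (Fin d) → EuclideanSpace ℝ (Fin m))
    (hstar : ∀ p ∈ L, star (Prod.fst p) = Prod.snd p)
    (W : Set (EuclideanSpace ℝ (Fin m)))
    (hWne : W.Nonempty) (hWc : IsCompact W)
    (hWreg : W = closure (interior W))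
    (hWbd : volume (frontier W) = 0)
    (f : EuclideanSpace ℝ (Fin m) → ℂ) (hf : Continuous f)
    (hsupp : Function.support f ⊆ W) :
    ∀ ε : ℝ, 0 < ε → ∃ r₀ : ℝ, ∀ r : ℝ, r₀ ≤ r → ∀ a : EuclideanSpace ℝ (Fin d),
      ‖(volume (closedBall (0 : EuclideanSpace ℝ (Fin d)) r)).toReal⁻¹ •
          (∑' x : (({x ∈ Prod.fst '' (L : Set (EuclideanSpace ℝ (Fin d) × EuclideanSpace ℝ (Fin m))) |
              star x ∈ W} ∩ closedBall a r : Set (EuclideanSpace ℝ (Fin d)))),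
            f (star (x : EuclideanSpace ℝ (Fin d)))) -
        (ZLattice.covolume L volume)⁻¹ • ∫ y in W, f y‖ ≤ ε := by
  intro ε hε
  have hcompact : HasCompactSupport f :=
    hWc.of_isClosed_subset isClosed_closure (closure_minimal hsupp hWc.isClosed)
  have hlim := weyl_regular_model_set_general volume volume hdense2 hstar hf hcompact hsupp
  obtain ⟨r₀, h⟩ := Filter.eventually_atTop.1 (Metric.tendstoUniformly_iff.1 hlim ε hε)
  exact ⟨r₀, fun r hr a ↦ (dist_eq_norm' _ _).ge.trans (h r hr a).le⟩
end

section
/- Weyl's theorem for dense point sets: assume a cut-and-project scheme with both projections injective on L̃ and both images dense. Let f : ℝ^m → ℂ be continuous with |x|^{m+1+α}|f(x)| ≤ C for constants C, α > 0. Then (1/vol(B_r(0))) ∑_{x ∈ L ∩ B_r(a)} f(x*) → (1/|det(L̃)|) ∫_{ℝ^m} f(u) du as r → ∞, uniformly in a ∈ ℝ^d. -/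
open MeasureTheory Metric

/-- The projection of the lattice to direct space. -/
def physL (d m : ℕ) (L : Submodule ℤ (EuclideanSpace ℝ (Fin d) × EuclideanSpace ℝ (Fin m))) :
    Set (EuclideanSpace ℝ (Fin d)) :=
  Prod.fst '' (L : Set (EuclideanSpace ℝ (Fin d) × EuclideanSpace ℝ (Fin m)))

/-!
The sum of `f (star x)` over the points `x` of the projected module in `a + T` is the value at
`(-a, 0)` of the `L`-periodization of `1_T(x) f(y)`. Modulo lattice vectors, any two points of
`A × B` differ by an error that is small in `B` and bounded in `A`, because the second projection of
`L` is dense and `L` is cocompact. The error in `B` changes the periodization little by the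
continuity and decay of `f`, the one in `A` only through lattice points near the boundary of `T`,
whose contribution is negligible compared with the volume of `T`. So the periodization is nearly
constant, hence close to its mean over a fundamental domain, which unfolds to
`vol T * ∫ f / covolume L`.
-/

open Filter Bornology Module
open scoped Topology Pointwise

section Periodization

variable {E F : Type*}

/-- The periodization `z ↦ ∑ p ∈ L, g (p + z)` of `g` along the lattice `L`, with the junk value
`0` at points where the sum diverges. -/
noncomputable def periodization [AddCommGroup E] [AddCommMonoid F] [TopologicalSpace F]
    (L : Submodule ℤ E) (g : E → F) (z : E) : F :=
  ∑' p : L, g (p + z)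

lemma periodization_add_coe [AddCommGroup E] [AddCommMonoid F] [TopologicalSpace F]
    (L : Submodule ℤ E) (g : E → F) (z : E) (q : L) :
    periodization L g (z + q) = periodization L g z := by
  rw [periodization, periodization, ← (Equiv.addRight q).tsum_eq fun p : L ↦ g (p + z)]
  exact tsum_congr fun p ↦ by
    rw [Equiv.coe_addRight, Submodule.coe_add, add_assoc, add_comm (q : E)]

variable [NormedAddCommGroup E]

lemma exists_pairwise_le_dist (L : Submodule ℤ E) [DiscreteTopology L] :
    ∃ δ > 0, Pairwise fun p q : L ↦ δ ≤ dist (p : E) q := by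
  obtain ⟨δ, hδ, hball⟩ := exists_ball_inter_eq_singleton_of_mem_discrete
    (isDiscrete_iff_discreteTopology.2 ‹DiscreteTopology L›) L.zero_mem
  refine ⟨δ, hδ, fun p q hpq ↦ ?_⟩
  by_contra! hlt
  have hmem : ((p - q : L) : E) ∈ ball 0 δ ∩ L :=
    ⟨by rwa [mem_ball_zero_iff, Submodule.coe_sub, ← dist_eq_norm], (p - q).2⟩
  rw [hball, Set.mem_singleton_iff, ZeroMemClass.coe_eq_zero] at hmem
  exact hpq (sub_eq_zero.1 hmem)

-- Packing argument: disjoint balls of a common small radius fit around the points of `L + z`.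
lemma exists_periodization_le_mul_integral [ProperSpace E] [MeasurableSpace E] [BorelSpace E]
    (μ : Measure E) [μ.IsAddHaarMeasure] (L : Submodule ℤ E) [DiscreteTopology L] :
    ∃ K, 0 ≤ K ∧ ∀ g φ : E → ℝ, (∀ x, 0 ≤ g x) → Integrable φ μ →
      (∀ x, ∀ y ∈ ball x 1, g x ≤ φ y) → ∀ z,
        Summable (fun p : L ↦ g (p + z)) ∧ periodization L g z ≤ K * ∫ x, φ x ∂μ := by
  obtain ⟨δ, hδ, hsep⟩ := exists_pairwise_le_dist L
  set ρ := min (δ / 2) 1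
  have hρ : 0 < ρ := by positivity
  set v := μ.real (ball 0 ρ)
  have hv : 0 < v := ENNReal.toReal_pos (measure_ball_pos μ 0 hρ).ne' measure_ball_lt_top.ne
  refine ⟨v⁻¹, by positivity, fun g φ hg hφ hgφ z ↦ ?_⟩
  have hφ0 : ∀ x, 0 ≤ φ x := fun x ↦ (hg x).trans (hgφ x x (mem_ball_self one_pos))
  have hdisj : Pairwise fun p q : L ↦ Disjoint (ball (p + z) ρ) (ball (q + z) ρ) := by
    refine fun p q hpq ↦ ball_disjoint_ball ?_
    rw [dist_add_right]
    linarith [hsep hpq, min_le_left (δ / 2) 1]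
  have hterm (p : L) : g (p + z) ≤ v⁻¹ * ∫ x in ball (p + z) ρ, φ x ∂μ := by
    have hvol : v = μ.real (ball (p + z) ρ) := (Measure.addHaar_real_ball_center ..).symm
    rw [le_inv_mul_iff₀ hv, mul_comm, hvol]
    exact setIntegral_ge_of_const_le_real measurableSet_ball measure_ball_lt_top.ne
      (fun x hx ↦ hgφ _ x (ball_subset_ball (min_le_right _ _) hx)) hφ.integrableOn
  have hsum (s : Finset L) : ∑ p ∈ s, g (p + z) ≤ v⁻¹ * ∫ x, φ x ∂μ := calc
    ∑ p ∈ s, g (p + z) ≤ ∑ p ∈ s, v⁻¹ * ∫ x in ball (p + z) ρ, φ x ∂μ :=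
      Finset.sum_le_sum fun p _ ↦ hterm p
    _ = v⁻¹ * ∫ x in ⋃ p ∈ s, ball (p + z) ρ, φ x ∂μ := by
      rw [← Finset.mul_sum, integral_biUnion_finset s (fun _ _ ↦ measurableSet_ball)
        (fun p _ q _ hpq ↦ hdisj hpq) fun _ _ ↦ hφ.integrableOn]
    _ ≤ v⁻¹ * ∫ x, φ x ∂μ := by
      gcongr ?_ * ?_
      exact setIntegral_le_integral hφ (ae_of_all _ hφ0)
  exact ⟨summable_of_sum_le (fun _ ↦ hg _) hsum, Real.tsum_le_of_sum_le (fun _ ↦ hg _) hsum⟩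

lemma exists_forall_norm_sub_le [NormedSpace ℝ E] [FiniteDimensional ℝ E] (L : Submodule ℤ E)
    [DiscreteTopology L] [IsZLattice ℝ L] : ∃ R : ℝ, ∀ x : E, ∃ p : L, ‖x - p‖ ≤ R := by
  let b := (Free.chooseBasis ℤ L).ofZLatticeBasis ℝ L
  refine ⟨∑ i, ‖b i‖, fun x ↦ ⟨⟨ZSpan.floor b x, ?_⟩, ZSpan.norm_fract_le b x⟩⟩
  exact ((Free.chooseBasis ℤ L).ofZLatticeBasis_span ℝ L).le (ZSpan.floor b x).2

variable [MeasurableSpace E] [BorelSpace E] [NormedAddCommGroup F] (μ : Measure E)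
  (L : Submodule ℤ E)

lemma summable_setIntegral_norm_translate [μ.IsAddLeftInvariant] [Countable L] {D : Set E}
    (hD : IsAddFundamentalDomain L D μ) {g : E → F} (hg : Integrable g μ) :
    Summable fun p : L ↦ ∫ x in D, ‖g (p + x)‖ ∂μ := by
  have : MeasurableVAdd L E := inferInstanceAs (MeasurableVAdd L.toAddSubgroup E)
  have : VAddInvariantMeasure L E μ := inferInstanceAs (VAddInvariantMeasure L.toAddSubgroup E μ)
  have hfin : ∑' p : L, ∫⁻ x in D, ‖g (p + x)‖ₑ ∂μ ≠ ⊤ :=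
    (hD.lintegral_eq_tsum'' (‖g ·‖ₑ)).symm.trans_ne hg.2.ne
  exact (ENNReal.summable_toReal hfin).congr fun p ↦
    (integral_norm_eq_lintegral_enorm (hg.comp_add_left _).aestronglyMeasurable.restrict).symm

variable [NormedSpace ℝ E] [FiniteDimensional ℝ E] [μ.IsAddHaarMeasure] [DiscreteTopology L]
  [IsZLattice ℝ L] [NormedSpace ℝ F] [CompleteSpace F]

lemma covolume_smul_periodization_sub_integral {D : Set E} (hD : IsAddFundamentalDomain L D μ)
    (hDfin : μ D < ⊤) {g : E → F} (hg : Integrable g μ)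
    (hsum : ∀ z, Summable fun p : L ↦ ‖g (p + z)‖) (z : E) :
    ZLattice.covolume L μ • periodization L g z - ∫ x, g x ∂μ =
      ∫ x in D, periodization L g z - periodization L g x ∂μ := by
  have : IsFiniteMeasure (μ.restrict D) := ⟨by simpa using hDfin⟩
  have : MeasurableVAdd L E := inferInstanceAs (MeasurableVAdd L.toAddSubgroup E)
  have : VAddInvariantMeasure L E μ := inferInstanceAs (VAddInvariantMeasure L.toAddSubgroup E μ)
  have hint (p : L) : IntegrableOn (fun x ↦ g (p + x)) D μ := (hg.comp_add_left _).integrableOn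
  have hnorm := summable_setIntegral_norm_translate μ L hD hg
  have hdiff (p : L) : ∫ x in D, ‖g (p + z) - g (p + x)‖ ∂μ ≤
      μ.real D * ‖g (p + z)‖ + ∫ x in D, ‖g (p + x)‖ ∂μ := by
    rw [← smul_eq_mul, ← setIntegral_const, ← integral_add (integrable_const _) (hint p).norm]
    exact integral_mono ((integrable_const _).sub (hint p)).norm
      ((integrable_const _).add (hint p).norm) fun _ ↦ norm_sub_le _ _
  calc
    _ = ∑' p : L, ∫ x in D, g (p + z) - g (p + x) ∂μ := by
      simp_rw [integral_sub (integrable_const _) (hint _), setIntegral_const]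
      rw [ZLattice.covolume_eq_measure_fundamentalDomain L μ hD, hD.integral_eq_tsum'' g hg,
        ((hsum z).of_norm.const_smul _).tsum_sub
          (hnorm.of_norm_bounded fun _ ↦ norm_integral_le_integral_norm _),
        periodization, tsum_const_smul'']
      rfl
    _ = ∫ x in D, ∑' p : L, (g (p + z) - g (p + x)) ∂μ :=
      integral_tsum_of_summable_integral_norm (fun p ↦ (integrable_const _).sub (hint p))
        (((hsum z).mul_left _).add hnorm |>.of_nonneg_of_le (fun _ ↦ by positivity) hdiff)
    _ = _ := by
      simp_rw [periodization, (hsum z).of_norm.tsum_sub (hsum _).of_norm]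

lemma norm_covolume_smul_periodization_sub_integral_le {g : E → F} (hg : Integrable g μ)
    (hsum : ∀ z, Summable fun p : L ↦ ‖g (p + z)‖) {z : E} {η : ℝ}
    (hη : ∀ x, ‖periodization L g z - periodization L g x‖ ≤ η) :
    ‖ZLattice.covolume L μ • periodization L g z - ∫ x, g x ∂μ‖ ≤ ZLattice.covolume L μ * η := by
  have hD := ZLattice.isAddFundamentalDomain (Free.chooseBasis ℤ L) μ
  have hDfin := (ZSpan.fundamentalDomain_isBounded
    ((Free.chooseBasis ℤ L).ofZLatticeBasis ℝ L)).measure_lt_top (μ := μ)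
  rw [covolume_smul_periodization_sub_integral μ L hD hDfin hg hsum,
    ZLattice.covolume_eq_measure_fundamentalDomain L μ hD, mul_comm]
  exact norm_setIntegral_le_of_norm_le_const hDfin fun x _ ↦ hη x

end Periodization

section Decay

variable {B F : Type*} [NormedAddCommGroup B] [NormedAddCommGroup F] {f : B → F}

lemma one_add_norm_rpow_neg_le_of_norm_sub_le_one {β : ℝ} (hβ : 0 ≤ β) {x y : B}
    (hxy : ‖x - y‖ ≤ 1) : (1 + ‖x‖) ^ (-β) ≤ 2 ^ β * (1 + ‖y‖) ^ (-β) := by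
  have hle : (1 + ‖y‖) / 2 ≤ 1 + ‖x‖ := by
    linarith [norm_sub_norm_le y x, norm_sub_rev x y, norm_nonneg x]
  calc
    (1 + ‖x‖) ^ (-β) ≤ ((1 + ‖y‖) / 2) ^ (-β) :=
      Real.rpow_le_rpow_of_nonpos (by positivity) hle (neg_nonpos.2 hβ)
    _ = 2 ^ β * (1 + ‖y‖) ^ (-β) := by
      rw [Real.div_rpow (by positivity) zero_le_two, Real.rpow_neg zero_le_two, div_inv_eq_mul,
        mul_comm]

lemma exists_norm_le_mul_one_add_norm_rpow_neg [ProperSpace B] (hf : Continuous f) {C β : ℝ}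
    (hβ : 0 ≤ β) (hdecay : ∀ x, ‖x‖ ^ β * ‖f x‖ ≤ C) :
    ∃ D, 0 < D ∧ ∀ x, ‖f x‖ ≤ D * (1 + ‖x‖) ^ (-β) := by
  have hcont : Continuous fun x ↦ (1 + ‖x‖) ^ β * ‖f x‖ :=
    ((continuous_const.add continuous_norm).rpow_const fun _ ↦ .inr hβ).mul hf.norm
  obtain ⟨M, hM⟩ := ((isCompact_closedBall (0 : B) 1).bddAbove_image hcont.continuousOn)
  refine ⟨max (max M (2 ^ β * C)) 1, by positivity, fun x ↦ ?_⟩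
  rw [Real.rpow_neg (by positivity), ← div_eq_mul_inv, le_div_iff₀ (by positivity), mul_comm]
  refine le_max_of_le_left ?_
  obtain hx | hx := le_total ‖x‖ 1
  · exact le_max_of_le_left (hM ⟨x, mem_closedBall_zero_iff.2 hx, rfl⟩)
  · refine le_max_of_le_right ?_
    calc
      (1 + ‖x‖) ^ β * ‖f x‖ ≤ (2 * ‖x‖) ^ β * ‖f x‖ := by gcongr; linarith
      _ = 2 ^ β * (‖x‖ ^ β * ‖f x‖) := by
        rw [Real.mul_rpow zero_le_two (norm_nonneg x), mul_assoc]
      _ ≤ 2 ^ β * C := by gcongr; exact hdecay x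

lemma uniformContinuous_of_norm_le_mul_one_add_norm_rpow_neg [ProperSpace B]
    (hf : Continuous f) {D β : ℝ} (hβ : 0 < β) (hfD : ∀ x, ‖f x‖ ≤ D * (1 + ‖x‖) ^ (-β)) :
    UniformContinuous f := by
  have hlim : Tendsto (fun x : B ↦ D * (1 + ‖x‖) ^ (-β)) (cocompact B) (𝓝 (D * 0)) :=
    ((tendsto_rpow_neg_atTop hβ).comp
      (tendsto_atTop_add_const_left _ 1 tendsto_norm_cocompact_atTop)).const_mul D
  rw [mul_zero] at hlim
  exact hf.uniformContinuous_of_tendsto_cocompact (squeeze_zero_norm hfD hlim)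

-- Interpolates between uniform continuity, which makes the left side small, and the decay of order
-- `β`, at the cost of lowering the order to `κ`.
lemma exists_norm_sub_le_mul_one_add_norm_rpow_neg [ProperSpace B] (hf : Continuous f)
    {D κ β : ℝ} (hκ : 0 ≤ κ) (hκβ : κ < β) (hD : 0 < D)
    (hfD : ∀ x, ‖f x‖ ≤ D * (1 + ‖x‖) ^ (-β)) {ε : ℝ} (hε : 0 < ε) :
    ∃ δ > 0, ∀ x y, ‖y - x‖ < δ → ‖f y - f x‖ ≤ ε * (1 + ‖x‖) ^ (-κ) := by
  have hβ : 0 < β := hκ.trans_lt hκβ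
  set θ := κ / β
  have hθ0 : 0 ≤ θ := by positivity
  have hθ1 : 0 < 1 - θ := sub_pos.2 ((div_lt_one hβ).2 hκβ)
  set D' := D * (2 ^ β + 1)
  have hD' : 0 < D' := by positivity
  set τ := (ε / D' ^ θ) ^ (1 - θ)⁻¹
  have hτ : τ ^ (1 - θ) = ε / D' ^ θ := Real.rpow_inv_rpow (by positivity) hθ1.ne'
  obtain ⟨δ, hδ, hfδ⟩ := Metric.uniformContinuous_iff.1
    (uniformContinuous_of_norm_le_mul_one_add_norm_rpow_neg hf hβ hfD) τ (by positivity)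
  refine ⟨min δ 1, by positivity, fun x y hxy ↦ ?_⟩
  have hsmall : ‖f y - f x‖ ≤ τ := by
    rw [← dist_eq_norm] at hxy ⊢
    exact (hfδ (hxy.trans_le (min_le_left _ _))).le
  have hdecay : ‖f y - f x‖ ≤ D' * (1 + ‖x‖) ^ (-β) := calc
    ‖f y - f x‖ ≤ D * (1 + ‖y‖) ^ (-β) + D * (1 + ‖x‖) ^ (-β) :=
      (norm_sub_le _ _).trans (add_le_add (hfD y) (hfD x))
    _ ≤ D * (2 ^ β * (1 + ‖x‖) ^ (-β)) + D * (1 + ‖x‖) ^ (-β) := by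
      gcongr
      exact one_add_norm_rpow_neg_le_of_norm_sub_le_one hβ.le (hxy.le.trans (min_le_right _ _))
    _ = D' * (1 + ‖x‖) ^ (-β) := by ring
  calc
    ‖f y - f x‖ = ‖f y - f x‖ ^ (1 - θ) * ‖f y - f x‖ ^ θ := by
      rw [← Real.rpow_add_of_nonneg (norm_nonneg _) hθ1.le hθ0, sub_add_cancel, Real.rpow_one]
    _ ≤ τ ^ (1 - θ) * (D' * (1 + ‖x‖) ^ (-β)) ^ θ := by gcongr
    _ = ε * (1 + ‖x‖) ^ (-κ) := by
      rw [hτ, Real.mul_rpow hD'.le (by positivity), ← Real.rpow_mul (by positivity),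
        ← mul_assoc, div_mul_cancel₀ _ (by positivity), neg_mul, mul_div_cancel₀ _ hβ.ne']

end Decay

section Slab

variable {A B F : Type*}

/-- The function `(x, y) ↦ 1_S(x) f(y)` on `A × B`: the restriction of `f ∘ Prod.snd` to the slab
`S × B`. -/
noncomputable def slab [Zero F] (S : Set A) (f : B → F) : A × B → F :=
  (Prod.fst ⁻¹' S).indicator (f ∘ Prod.snd)

lemma slab_of_mem [Zero F] {S : Set A} {f : B → F} {p : A × B} (hp : p.1 ∈ S) :
    slab S f p = f p.2 :=
  Set.indicator_of_mem (s := Prod.fst ⁻¹' S) hp _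

lemma slab_of_notMem [Zero F] {S : Set A} {f : B → F} {p : A × B} (hp : p.1 ∉ S) :
    slab S f p = 0 :=
  Set.indicator_of_notMem (s := Prod.fst ⁻¹' S) hp _

lemma slab_nonneg {S : Set A} {w : B → ℝ} (hw : ∀ y, 0 ≤ w y) (p : A × B) : 0 ≤ slab S w p :=
  Set.indicator_nonneg (fun _ _ ↦ hw _) p

variable [NormedAddCommGroup F]

lemma norm_slab_le {S : Set A} {f : B → F} {w : B → ℝ} {D : ℝ} (hfw : ∀ y, ‖f y‖ ≤ D * w y)
    (p : A × B) : ‖slab S f p‖ ≤ D * slab S w p := by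
  by_cases hp : p.1 ∈ S
  · simpa only [slab_of_mem hp] using hfw p.2
  · simp only [slab_of_notMem hp, norm_zero, mul_zero, le_refl]

variable [MeasurableSpace A] [MeasurableSpace B] (μ : Measure A) (ν : Measure B) [SFinite μ]
  [SFinite ν] {S : Set A} {f : B → F}

lemma integrable_slab (hS : MeasurableSet S) (hSfin : μ S ≠ ⊤) (hf : Integrable f ν) :
    Integrable (slab S f) (μ.prod ν) := by
  have : IsFiniteMeasure (μ.restrict S) := isFiniteMeasure_restrict.2 hSfin
  rw [slab, integrable_indicator_iff (measurable_fst hS), IntegrableOn, ← Set.prod_univ,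
    ← Measure.prod_restrict, Measure.restrict_univ]
  exact hf.comp_snd _

lemma integral_slab [NormedSpace ℝ F] (hS : MeasurableSet S) :
    ∫ p, slab S f p ∂μ.prod ν = μ.real S • ∫ y, f y ∂ν := by
  rw [slab, integral_indicator (measurable_fst hS), ← Set.prod_univ, ← Measure.prod_restrict,
    Measure.restrict_univ]
  exact (integral_fun_snd f).trans (by rw [measureReal_restrict_apply_univ])

end Slab

section BoundaryZone

variable {A : Type*} [PseudoMetricSpace A]

/-- The van Hove boundary of width `s` of `T`: the points within distance `s` of both `T` and its
complement. -/
def boundaryZone (s : ℝ) (T : Set A) : Set A :=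
  thickening s T ∩ thickening s Tᶜ

lemma thickening_boundaryZone_subset (r s : ℝ) (T : Set A) :
    thickening r (boundaryZone s T) ⊆ boundaryZone (r + s) T :=
  (Set.subset_inter (thickening_subset_of_subset r Set.inter_subset_left)
    (thickening_subset_of_subset r Set.inter_subset_right)).trans
    (Set.inter_subset_inter (thickening_thickening_subset r s T)
      (thickening_thickening_subset r s Tᶜ))

lemma isBounded_boundaryZone (s : ℝ) {T : Set A} (hT : IsBounded T) :
    IsBounded (boundaryZone s T) :=
  hT.thickening.subset Set.inter_subset_left

lemma thickening_subset_union_boundaryZone {s : ℝ} (hs : 0 < s) (T : Set A) :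
    thickening s T ⊆ T ∪ boundaryZone s T := fun _ hx ↦
  or_iff_not_imp_left.2 fun hxT ↦ ⟨hx, self_subset_thickening hs _ hxT⟩

lemma boundaryZone_closedBall_subset (x : A) (r s : ℝ) :
    boundaryZone s (closedBall x r) ⊆ closedBall x (r + s) \ closedBall x (r - s) := by
  rintro y ⟨hy, hy'⟩
  obtain ⟨z, hz, hyz⟩ := mem_thickening_iff.1 hy
  obtain ⟨z', hz', hyz'⟩ := mem_thickening_iff.1 hy'
  rw [mem_closedBall] at hz
  rw [Set.mem_compl_iff, mem_closedBall] at hz'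
  rw [Set.mem_sdiff, mem_closedBall, mem_closedBall]
  constructor
  · linarith [dist_triangle y z x]
  · linarith [dist_triangle z' y x, dist_comm y z']

lemma norm_slab_sub_slab_le {B F : Type*} [NormedAddCommGroup B] [NormedAddCommGroup F]
    {f : B → F} {w : B → ℝ} {T : Set A} {s δ ε D : ℝ} (hε : 0 ≤ ε) (hD : 0 ≤ D)
    (hw : ∀ y, 0 ≤ w y) (hfw : ∀ y, ‖f y‖ ≤ D * w y)
    (hfδ : ∀ y y', ‖y' - y‖ < δ → ‖f y' - f y‖ ≤ ε * w y) {p q : A × B}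
    (hfst : dist q.1 p.1 < s) (hsnd : ‖q.2 - p.2‖ < δ) :
    ‖slab T f q - slab T f p‖ ≤
      ε * slab (thickening s T) w p + D * slab (boundaryZone s T) w p := by
  have hs : 0 < s := dist_nonneg.trans_lt hfst
  have hzone : 0 ≤ D * slab (boundaryZone s T) w p := mul_nonneg hD (slab_nonneg hw p)
  have hthick : 0 ≤ ε * slab (thickening s T) w p := mul_nonneg hε (slab_nonneg hw p)
  have hclose : ‖f q.2 - f p.2‖ ≤ ε * w p.2 := hfδ _ _ hsnd
  by_cases hp : p.1 ∈ T <;> by_cases hq : q.1 ∈ T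
  · rw [slab_of_mem hq, slab_of_mem hp, slab_of_mem (self_subset_thickening hs T hp)]
    linarith
  · have hpzone : p.1 ∈ boundaryZone s T :=
      ⟨self_subset_thickening hs T hp, mem_thickening_iff.2 ⟨q.1, hq, dist_comm q.1 p.1 ▸ hfst⟩⟩
    rw [slab_of_notMem hq, slab_of_mem hp, slab_of_mem hpzone, zero_sub, norm_neg]
    linarith [hfw p.2]
  · have hpthick : p.1 ∈ thickening s T :=
      mem_thickening_iff.2 ⟨q.1, hq, dist_comm q.1 p.1 ▸ hfst⟩
    have hpzone : p.1 ∈ boundaryZone s T := ⟨hpthick, self_subset_thickening hs _ hp⟩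
    rw [slab_of_mem hq, slab_of_notMem hp, slab_of_mem hpthick, slab_of_mem hpzone, sub_zero]
    linarith [hfw p.2, norm_le_norm_sub_add (f q.2) (f p.2)]
  · rw [slab_of_notMem hq, slab_of_notMem hp, sub_zero, norm_zero]
    positivity

variable [MeasurableSpace A]

/-- A family of bounded measurable sets whose van Hove boundary of every fixed width becomes
negligible compared with the set itself: the averaging sets of the point-set means. -/
structure IsVanHove {ι : Type*} (μ : Measure A) (T : ι → Set A) (l : Filter ι) : Prop where
  measurableSet : ∀ i, MeasurableSet (T i)
  isBounded : ∀ i, IsBounded (T i)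
  measureReal_pos : ∀ᶠ i in l, 0 < μ.real (T i)
  tendsto_boundaryZone : ∀ s > 0,
    Tendsto (fun i ↦ μ.real (boundaryZone s (T i)) / μ.real (T i)) l (𝓝 0)

lemma measureReal_thickening_le [ProperSpace A] (μ : Measure A) [IsFiniteMeasureOnCompacts μ]
    {s : ℝ} (hs : 0 < s) {T : Set A} (hT : IsBounded T) :
    μ.real (thickening s T) ≤ μ.real T + μ.real (boundaryZone s T) :=
  (measureReal_mono (thickening_subset_union_boundaryZone hs T)
    (hT.union (isBounded_boundaryZone s hT)).measure_lt_top.ne).trans (measureReal_union_le _ _)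

end BoundaryZone

section Ball

variable {A : Type*} [NormedAddCommGroup A] [NormedSpace ℝ A] [FiniteDimensional ℝ A]
  [MeasurableSpace A] [BorelSpace A] (μ : Measure A) [μ.IsAddHaarMeasure]

lemma tendsto_measureReal_closedBall_add_div (x : A) (s : ℝ) :
    Tendsto (fun r ↦ μ.real (closedBall x (r + s)) / μ.real (closedBall x r)) atTop (𝓝 1) := by
  have hlim : Tendsto (fun r : ℝ ↦ (1 + s / r) ^ finrank ℝ A) atTop (𝓝 ((1 + 0) ^ finrank ℝ A)) :=
    ((tendsto_id.const_div_atTop s).const_add 1).pow _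
  rw [add_zero, one_pow] at hlim
  refine hlim.congr' ?_
  filter_upwards [eventually_gt_atTop 0, eventually_ge_atTop (-s)] with r hr hrs
  have hball : 0 < μ.real (ball (0 : A) 1) :=
    ENNReal.toReal_pos (measure_ball_pos μ 0 one_pos).ne' measure_ball_lt_top.ne
  rw [Measure.addHaar_real_closedBall μ x (by linarith), Measure.addHaar_real_closedBall μ x hr.le,
    mul_div_mul_right _ _ hball.ne', ← div_pow, add_div, div_self hr.ne']

lemma isVanHove_closedBall (x : A) : IsVanHove μ (closedBall x) atTop where
  measurableSet _ := measurableSet_closedBall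
  isBounded _ := isBounded_closedBall
  measureReal_pos := (eventually_gt_atTop 0).mono fun r hr ↦
    ENNReal.toReal_pos (measure_closedBall_pos μ x hr).ne' measure_closedBall_lt_top.ne
  tendsto_boundaryZone s hs := by
    have hlim := (tendsto_measureReal_closedBall_add_div μ x s).sub
      (tendsto_measureReal_closedBall_add_div μ x (-s))
    rw [sub_self] at hlim
    refine squeeze_zero (fun r ↦ by positivity) (fun r ↦ ?_) hlim
    have hsub : closedBall x (r - s) ⊆ closedBall x (r + s) :=
      closedBall_subset_closedBall (by linarith)
    rw [← sub_div, ← sub_eq_add_neg, ← measureReal_sdiff hsub measurableSet_closedBall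
      measure_closedBall_lt_top.ne]
    gcongr
    · exact ne_top_of_le_ne_top measure_closedBall_lt_top.ne (measure_mono Set.sdiff_subset)
    · exact boundaryZone_closedBall_subset x r s

end Ball

section CutAndProject

variable {A B F : Type*} [NormedAddCommGroup A] [NormedAddCommGroup B] [NormedAddCommGroup F]
  {f : B → F} {D : ℝ}

lemma norm_periodization_slab_sub_le (L : Submodule ℤ (A × B)) {w : B → ℝ} {T : Set A}
    {s δ ε : ℝ} (hε : 0 ≤ ε) (hD : 0 ≤ D) (hw : ∀ y, 0 ≤ w y) (hfw : ∀ y, ‖f y‖ ≤ D * w y)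
    (hfδ : ∀ y y', ‖y' - y‖ < δ → ‖f y' - f y‖ ≤ ε * w y)
    (hsum : ∀ z : A × B, Summable fun p : L ↦ slab T f (p + z)) {z z' : A × B}
    (hsumT : Summable fun p : L ↦ slab (thickening s T) w ((p : A × B) + z))
    (hsumZ : Summable fun p : L ↦ slab (boundaryZone s T) w ((p : A × B) + z))
    (hfst : dist z'.1 z.1 < s) (hsnd : ‖z'.2 - z.2‖ < δ) :
    ‖periodization L (slab T f) z' - periodization L (slab T f) z‖ ≤
      ε * periodization L (slab (thickening s T) w) z +
        D * periodization L (slab (boundaryZone s T) w) z := by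
  rw [periodization, periodization, ← (hsum z').tsum_sub (hsum z)]
  refine tsum_of_norm_bounded ((hsumT.hasSum.mul_left ε).add (hsumZ.hasSum.mul_left D))
    fun p ↦ norm_slab_sub_slab_le hε hD hw hfw hfδ ?_ ?_
  · rwa [Prod.fst_add, Prod.fst_add, dist_add_left]
  · rwa [Prod.snd_add, Prod.snd_add, add_sub_add_left_eq_sub]

variable [NormedSpace ℝ A] [FiniteDimensional ℝ A] [NormedSpace ℝ B] [FiniteDimensional ℝ B]

lemma exists_forall_norm_fst_sub_lt_norm_snd_sub_lt (L : Submodule ℤ (A × B)) [DiscreteTopology L]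
    [IsZLattice ℝ L] (hdense : Dense (Prod.snd '' (L : Set (A × B)))) {δ : ℝ} (hδ : 0 < δ) :
    ∃ s > 0, ∀ w : A × B, ∃ q : L, ‖w.1 - (q : A × B).1‖ < s ∧ ‖w.2 - (q : A × B).2‖ < δ := by
  obtain ⟨R, hR⟩ := exists_forall_norm_sub_le L
  obtain ⟨t, ht⟩ := (isCompact_closedBall (0 : B) R).elim_finite_subcover
    (fun q : L ↦ ball (q : A × B).2 δ) (fun _ ↦ isOpen_ball) fun y _ ↦ by
      obtain ⟨_, ⟨q, hq, rfl⟩, hy⟩ := hdense.exists_dist_lt y hδ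
      exact Set.mem_iUnion.2 ⟨⟨q, hq⟩, hy⟩
  have hR0 : 0 ≤ R := (norm_nonneg _).trans (hR 0).choose_spec
  refine ⟨R + ∑ q ∈ t, ‖(q : A × B).1‖ + 1, by positivity, fun w ↦ ?_⟩
  obtain ⟨p, hp⟩ := hR w
  obtain ⟨q, hqt, hq⟩ := Set.mem_iUnion₂.1
    (ht (mem_closedBall_zero_iff.2 ((norm_snd_le _).trans hp)))
  refine ⟨p + q, ?_, ?_⟩
  · calc
      ‖w.1 - (p + q : A × B).1‖ = ‖(w - p).1 - (q : A × B).1‖ := by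
        rw [Prod.fst_add, Prod.fst_sub, sub_sub]
      _ ≤ ‖(w - p).1‖ + ‖(q : A × B).1‖ := norm_sub_le _ _
      _ ≤ R + ∑ q ∈ t, ‖(q : A × B).1‖ := by
        gcongr
        · exact (norm_fst_le _).trans hp
        · exact Finset.single_le_sum (f := fun q : L ↦ ‖(q : A × B).1‖)
            (fun _ _ ↦ norm_nonneg _) hqt
      _ < _ := lt_add_one _
  · rwa [Submodule.coe_add, Prod.snd_add, ← sub_sub, ← Prod.snd_sub, ← dist_eq_norm]

lemma exists_periodization_slab_le [MeasurableSpace A] [BorelSpace A] (μ : Measure A)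
    [μ.IsAddHaarMeasure] (L : Submodule ℤ (A × B)) [DiscreteTopology L] {κ : ℝ}
    (hκ : finrank ℝ B < κ) :
    ∃ K, 0 ≤ K ∧ ∀ S : Set A, IsBounded S → ∀ z : A × B,
      Summable (fun p : L ↦ slab S (fun y : B ↦ (1 + ‖y‖) ^ (-κ)) ((p : A × B) + z)) ∧
      periodization L (slab S fun y ↦ (1 + ‖y‖) ^ (-κ)) z ≤ K * μ.real (thickening 1 S) := by
  borelize B
  let ν : Measure B := Measure.addHaar
  have : (μ.prod ν).IsAddHaarMeasure := Measure.prod.instIsAddHaarMeasure _ _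
  obtain ⟨K, hK, hKle⟩ := exists_periodization_le_mul_integral (μ.prod ν) L
  have hκ0 : 0 ≤ κ := (Nat.cast_nonneg _).trans hκ.le
  let w : B → ℝ := fun y ↦ 2 ^ κ * (1 + ‖y‖) ^ (-κ)
  have hw0 : ∀ y, 0 ≤ w y := fun y ↦ by positivity
  have hw : Integrable w ν := (integrable_one_add_norm hκ).const_mul _
  refine ⟨K * ∫ y, w y ∂ν, mul_nonneg hK (integral_nonneg hw0), fun S hS z ↦ ?_⟩
  have hthick : MeasurableSet (thickening 1 S) := isOpen_thickening.measurableSet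
  rw [mul_assoc, mul_comm (∫ y, w y ∂ν), ← smul_eq_mul (μ.real _), ← integral_slab μ ν hthick]
  refine hKle _ _ (slab_nonneg fun y ↦ by positivity)
    (integrable_slab μ ν hthick hS.thickening.measure_lt_top.ne hw) (fun x y hxy ↦ ?_) z
  obtain ⟨hfst, hsnd⟩ := max_lt_iff.1 (Prod.dist_eq.symm.trans_lt (mem_ball'.1 hxy))
  by_cases hx : x.1 ∈ S
  · rw [slab_of_mem hx, slab_of_mem (mem_thickening_iff.2 ⟨x.1, hx, dist_comm x.1 y.1 ▸ hfst⟩)]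
    exact one_add_norm_rpow_neg_le_of_norm_sub_le_one hκ0 (dist_eq_norm x.2 y.2 ▸ hsnd.le)
  · rw [slab_of_notMem hx]
    exact slab_nonneg hw0 y

lemma summable_norm_slab (L : Submodule ℤ (A × B)) [DiscreteTopology L] {β : ℝ}
    (hβ : finrank ℝ B < β) (hfD : ∀ y, ‖f y‖ ≤ D * (1 + ‖y‖) ^ (-β)) {S : Set A} (hS : IsBounded S)
    (z : A × B) : Summable fun p : L ↦ ‖slab S f (p + z)‖ := by
  borelize A
  obtain ⟨K, -, hK⟩ := exists_periodization_slab_le (Measure.addHaar : Measure A) L hβ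
  exact ((hK S hS z).1.mul_left D).of_nonneg_of_le (fun _ ↦ norm_nonneg _)
    fun p ↦ norm_slab_le hfD _

variable [CompleteSpace F] [MeasurableSpace A] [BorelSpace A] (μ : Measure A) [μ.IsAddHaarMeasure]
  (L : Submodule ℤ (A × B)) [DiscreteTopology L] {β : ℝ}

lemma exists_norm_periodization_slab_sub_le_of_norm_sub_lt (hf : Continuous f)
    (hβ : finrank ℝ B < β) (hD : 0 < D) (hfD : ∀ y, ‖f y‖ ≤ D * (1 + ‖y‖) ^ (-β)) {ε : ℝ}
    (hε : 0 < ε) : ∃ δ > 0, ∃ K, ∀ s > 0, ∀ T : Set A, IsBounded T → ∀ z z' : A × B,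
      ‖z'.1 - z.1‖ < s → ‖z'.2 - z.2‖ < δ →
      ‖periodization L (slab T f) z' - periodization L (slab T f) z‖ ≤
        ε * μ.real T + K * μ.real (boundaryZone (1 + s) T) := by
  obtain ⟨κ, hκ, hκβ⟩ := exists_between hβ
  have hκ0 : 0 ≤ κ := (Nat.cast_nonneg _).trans hκ.le
  obtain ⟨K, hK, hKle⟩ := exists_periodization_slab_le μ L hκ
  have hη : 0 < ε / (K + 1) := by positivity
  have hηK : ε / (K + 1) * K ≤ ε := by
    rw [div_mul_eq_mul_div, div_le_iff₀ (by positivity)]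
    linarith
  obtain ⟨δ, hδ, hfδ⟩ := exists_norm_sub_le_mul_one_add_norm_rpow_neg hf hκ0 hκβ hD hfD hη
  have hfκ (y : B) : ‖f y‖ ≤ D * (1 + ‖y‖) ^ (-κ) := (hfD y).trans <| by
    gcongr
    exact le_add_of_nonneg_right (norm_nonneg y)
  refine ⟨δ, hδ, ε + D * K, fun s hs T hT z z' hfst hsnd ↦ ?_⟩
  obtain ⟨hsumT, hleT⟩ := hKle _ (hT.thickening (δ := s)) z
  obtain ⟨hsumZ, hleZ⟩ := hKle _ (isBounded_boundaryZone s hT) z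
  have hthick : μ.real (thickening 1 (thickening s T)) ≤
      μ.real T + μ.real (boundaryZone (1 + s) T) :=
    (measureReal_mono (thickening_thickening_subset 1 s T)
      hT.thickening.measure_lt_top.ne).trans (measureReal_thickening_le μ (by positivity) hT)
  have hzone : μ.real (thickening 1 (boundaryZone s T)) ≤ μ.real (boundaryZone (1 + s) T) :=
    measureReal_mono (thickening_boundaryZone_subset 1 s T)
      (isBounded_boundaryZone _ hT).measure_lt_top.ne
  calc
    _ ≤ _ := norm_periodization_slab_sub_le L hη.le hD.le (fun y ↦ by positivity) hfκ hfδ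
      (fun x ↦ (summable_norm_slab L hβ hfD hT x).of_norm) hsumT hsumZ
      (dist_eq_norm z'.1 z.1 ▸ hfst) hsnd
    _ ≤ ε / (K + 1) * (K * (μ.real T + μ.real (boundaryZone (1 + s) T))) +
        D * (K * μ.real (boundaryZone (1 + s) T)) := by
      gcongr
      · exact hleT.trans (by gcongr)
      · exact hleZ.trans (by gcongr)
    _ ≤ ε * (μ.real T + μ.real (boundaryZone (1 + s) T)) +
        D * (K * μ.real (boundaryZone (1 + s) T)) := by
      rw [← mul_assoc]
      gcongr
    _ = ε * μ.real T + (ε + D * K) * μ.real (boundaryZone (1 + s) T) := by ring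

variable [IsZLattice ℝ L]

-- Translating by a lattice point leaves the periodization unchanged, so by density of the second
-- projection any two points may be assumed to differ by little in `B` and boundedly in `A`.
lemma exists_norm_periodization_slab_sub_le (hdense : Dense (Prod.snd '' (L : Set (A × B))))
    (hf : Continuous f) (hβ : finrank ℝ B < β) (hD : 0 < D)
    (hfD : ∀ y, ‖f y‖ ≤ D * (1 + ‖y‖) ^ (-β)) {ε : ℝ} (hε : 0 < ε) :
    ∃ s > 0, ∃ K, ∀ T : Set A, IsBounded T → ∀ z w : A × B,
      ‖periodization L (slab T f) z - periodization L (slab T f) w‖ ≤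
        ε * μ.real T + K * μ.real (boundaryZone s T) := by
  obtain ⟨δ, hδ, K, hK⟩ :=
    exists_norm_periodization_slab_sub_le_of_norm_sub_lt μ L hf hβ hD hfD hε
  obtain ⟨s, hs, hcover⟩ := exists_forall_norm_fst_sub_lt_norm_snd_sub_lt L hdense hδ
  refine ⟨1 + s, by positivity, K, fun T hT z w ↦ ?_⟩
  obtain ⟨q, hfst, hsnd⟩ := hcover (z - w)
  rw [← periodization_add_coe L _ w q]
  refine hK s hs T hT _ _ ?_ ?_
  · rwa [Prod.fst_add, ← sub_sub, ← Prod.fst_sub]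
  · rwa [Prod.snd_add, ← sub_sub, ← Prod.snd_sub]

variable [NormedSpace ℝ F] [MeasurableSpace B] [BorelSpace B] (ν : Measure B) [ν.IsAddHaarMeasure]

lemma tendstoUniformly_smul_periodization_slab {ι : Type*} {T : ι → Set A} {l : Filter ι}
    (hT : IsVanHove μ T l) (hdense : Dense (Prod.snd '' (L : Set (A × B)))) (hf : Continuous f)
    (hβ : finrank ℝ B < β) (hD : 0 < D) (hfD : ∀ y, ‖f y‖ ≤ D * (1 + ‖y‖) ^ (-β)) :
    TendstoUniformly (fun i z ↦ (μ.real (T i))⁻¹ • periodization L (slab (T i) f) z)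
      (fun _ ↦ (ZLattice.covolume L (μ.prod ν))⁻¹ • ∫ u, f u ∂ν) l := by
  have : (μ.prod ν).IsAddHaarMeasure := Measure.prod.instIsAddHaarMeasure _ _
  have hfint : Integrable f ν := ((integrable_one_add_norm hβ).const_mul D).mono'
    hf.aestronglyMeasurable (ae_of_all _ hfD)
  have hcov : 0 < ZLattice.covolume L (μ.prod ν) := ZLattice.covolume_pos L _
  rw [Metric.tendstoUniformly_iff]
  intro ε hε
  obtain ⟨s, hs, K, hosc⟩ :=
    exists_norm_periodization_slab_sub_le μ L hdense hf hβ hD hfD (half_pos hε)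
  have hsmall : ∀ᶠ i in l, K * (μ.real (boundaryZone s (T i)) / μ.real (T i)) < ε / 2 :=
    ((hT.tendsto_boundaryZone s hs).const_mul K).eventually_lt_const (by simpa using half_pos hε)
  filter_upwards [hsmall, hT.measureReal_pos] with i hi hpos z
  have hmean := norm_covolume_smul_periodization_sub_integral_le (μ.prod ν) L
    (integrable_slab μ ν (hT.measurableSet i) (hT.isBounded i).measure_lt_top.ne hfint)
    (summable_norm_slab L hβ hfD (hT.isBounded i)) (hosc (T i) (hT.isBounded i) z)
  rw [integral_slab μ ν (hT.measurableSet i)] at hmean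
  set V := μ.real (T i)
  set c := ZLattice.covolume L (μ.prod ν)
  have hrescale : V⁻¹ • periodization L (slab (T i) f) z - c⁻¹ • ∫ u, f u ∂ν =
      (c * V)⁻¹ • (c • periodization L (slab (T i) f) z - V • ∫ u, f u ∂ν) := by
    rw [smul_sub, smul_smul, smul_smul]
    congr 2 <;> field_simp
  rw [dist_comm, dist_eq_norm, hrescale, norm_smul, Real.norm_of_nonneg (by positivity)]
  calc
    _ ≤ (c * V)⁻¹ * (c * (ε / 2 * V + K * μ.real (boundaryZone s (T i)))) := by gcongr
    _ = ε / 2 + K * (μ.real (boundaryZone s (T i)) / V) := by field_simp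
    _ < ε := by linarith

end CutAndProject

section PointSet

lemma tsum_fst_image_inter_vadd {A B F : Type*} [AddCommGroup A] [AddCommGroup B] [AddCommMonoid F]
    [TopologicalSpace F] {L : Submodule ℤ (A × B)} (hinj : Set.InjOn Prod.fst (L : Set (A × B)))
    {star : A → B} (hstar : ∀ p ∈ L, star p.1 = p.2) (f : B → F) (T : Set A) (a : A) :
    ∑' x : ↥(Prod.fst '' (L : Set (A × B)) ∩ (a +ᵥ T)), f (star x) =
      periodization L (slab T f) (-a, 0) := by
  rw [← Set.image_inter_preimage, tsum_image (fun x ↦ f (star x)) (hinj.mono Set.inter_subset_left),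
    tsum_subtype ((L : Set (A × B)) ∩ Prod.fst ⁻¹' (a +ᵥ T)) (fun p ↦ f (star p.1)),
    ← Set.indicator_indicator, ← tsum_subtype, periodization]
  refine tsum_congr fun p ↦ ?_
  have hfst : ((p : A × B) + (-a, 0)).1 = -a + (p : A × B).1 := add_comm _ _
  have hsnd : ((p : A × B) + (-a, 0)).2 = (p : A × B).2 := add_zero _
  by_cases hp : (p : A × B).1 ∈ a +ᵥ T
  · rw [Set.indicator_of_mem (s := Prod.fst ⁻¹' (a +ᵥ T)) hp, slab_of_mem, hsnd, hstar p p.2]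
    rwa [hfst, ← vadd_eq_add, ← Set.mem_vadd_set_iff_neg_vadd_mem]
  · rw [Set.indicator_of_notMem (s := Prod.fst ⁻¹' (a +ᵥ T)) hp, slab_of_notMem]
    rwa [hfst, ← vadd_eq_add, ← Set.mem_vadd_set_iff_neg_vadd_mem]

end PointSet

theorem weyl_dense_point_sets_general {A B F ι : Type*} [NormedAddCommGroup A] [NormedSpace ℝ A]
    [FiniteDimensional ℝ A] [MeasurableSpace A] [BorelSpace A] [NormedAddCommGroup B]
    [NormedSpace ℝ B] [FiniteDimensional ℝ B] [MeasurableSpace B] [BorelSpace B]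
    [NormedAddCommGroup F] [NormedSpace ℝ F] [CompleteSpace F] (μ : Measure A) [μ.IsAddHaarMeasure]
    (ν : Measure B) [ν.IsAddHaarMeasure] {L : Submodule ℤ (A × B)} [DiscreteTopology L]
    [IsZLattice ℝ L] (hinj : Set.InjOn Prod.fst (L : Set (A × B)))
    (hdense : Dense (Prod.snd '' (L : Set (A × B)))) {star : A → B}
    (hstar : ∀ p ∈ L, star p.1 = p.2) {f : B → F} (hf : Continuous f) {C β : ℝ}
    (hβ : finrank ℝ B < β) (hdecay : ∀ y, ‖y‖ ^ β * ‖f y‖ ≤ C) {T : ι → Set A} {l : Filter ι}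
    (hT : IsVanHove μ T l) :
    TendstoUniformly
      (fun i (a : A) ↦ (μ.real (T i))⁻¹ •
        ∑' x : ↥(Prod.fst '' (L : Set (A × B)) ∩ (a +ᵥ T i)), f (star x))
      (fun _ ↦ (ZLattice.covolume L (μ.prod ν))⁻¹ • ∫ u, f u ∂ν) l := by
  obtain ⟨D, hD, hfD⟩ :=
    exists_norm_le_mul_one_add_norm_rpow_neg hf ((Nat.cast_nonneg _).trans hβ.le) hdecay
  simp_rw [tsum_fst_image_inter_vadd hinj hstar]
  exact (tendstoUniformly_smul_periodization_slab μ L ν hT hdense hf hβ hD hfD).comp fun a ↦ (-a, 0)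

/-- Weyl's theorem for dense point sets: the ball averages of f(x*)
over the dense projected module L converge, uniformly in the ball center a, to the
normalized integral of f over all of internal space. -/
theorem weyl_dense_point_sets (d m : ℕ)
    (L : Submodule ℤ (EuclideanSpace ℝ (Fin d) × EuclideanSpace ℝ (Fin m)))
    [DiscreteTopology L] [IsZLattice ℝ L]
    (hinj1 : Set.InjOn Prod.fst (L : Set (EuclideanSpace ℝ (Fin d) × EuclideanSpace ℝ (Fin m))))
    (hdense1 : Dense (physL d m L))
    (hinj2 : Set.InjOn Prod.snd (L : Set (EuclideanSpace ℝ (Fin d) × EuclideanSpace ℝ (Fin m))))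
    (hdense2 : Dense (Prod.snd '' (L : Set (EuclideanSpace ℝ (Fin d) × EuclideanSpace ℝ (Fin m)))))
    (star : EuclideanSpace ℝ (Fin d) → EuclideanSpace ℝ (Fin m))
    (hstar : ∀ p ∈ L, star (Prod.fst p) = Prod.snd p)
    (f : EuclideanSpace ℝ (Fin m) → ℂ) (hf : Continuous f)
    (C α : ℝ) (hC : 0 < C) (hα : 0 < α)
    (hdecay : ∀ x : EuclideanSpace ℝ (Fin m), ‖x‖ ^ ((m : ℝ) + 1 + α) * ‖f x‖ ≤ C) :
    ∀ ε : ℝ, 0 < ε → ∃ r₀ : ℝ, ∀ r : ℝ, r₀ ≤ r → ∀ a : EuclideanSpace ℝ (Fin d),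
      ‖(volume (closedBall (0 : EuclideanSpace ℝ (Fin d)) r)).toReal⁻¹ •
          (∑' x : ((physL d m L ∩ closedBall a r : Set (EuclideanSpace ℝ (Fin d)))),
            f (star (x : EuclideanSpace ℝ (Fin d)))) -
        (ZLattice.covolume L volume)⁻¹ • ∫ u, f u‖ ≤ ε := by
  have hdim : (finrank ℝ (EuclideanSpace ℝ (Fin m)) : ℝ) < m + 1 + α := by
    rw [finrank_euclideanSpace_fin]
    linarith
  intro ε hε
  obtain ⟨r₀, hr₀⟩ := eventually_atTop.1 <| Metric.tendstoUniformly_iff.1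
    (weyl_dense_point_sets_general volume volume hinj1 hdense2 hstar hf hdim hdecay
      (isVanHove_closedBall volume 0)) ε hε
  refine ⟨r₀, fun r hr a ↦ ?_⟩
  have hlt := hr₀ r hr a
  rw [vadd_closedBall, vadd_eq_add, add_zero, dist_comm, dist_eq_norm] at hlt
  exact hlt.le
end

section
/- Existence of weighted density: under the dense cut-and-project hypotheses (both projections injective, both images dense), with f : ℝ^m → ℂ continuous and |x|^{m+1+α}|f(x)| ≤ C, the weighted density ρ = lim_{r→∞} ω(B_r)/vol(B_r) exists and equals (1/|det(L̃)|) ∫_{ℝ^m} f(u) du, where ω = ∑_{x∈L} f(x*) δ_x. -/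
open MeasureTheory Metric

/-!
Let `ω_v(B_r)` be the mass that the comb of the translate `L + v` gives to the ball `B_r`, so that
`ω_0(B_r)` is the sum to be estimated. As a function of `v` it is the `L`-periodization of
`1_{B_r} ⊗ f`. Packing disjoint balls around the points of `L` bounds such a sum by an integral,
which gives `ω_v(B_r) = O(vol B_r)` uniformly in `v`. A shift of `v` along the physical space only
changes it in a boundary layer of `B_r`, hence by `o(vol B_r)`; a small shift along the internal
space changes it by at most `ε vol B_r`. Since the internal projection of `L` is dense, any two
points differ, up to a lattice vector, by two such shifts, so `ω_v(B_r)` and `ω_w(B_r)` agree up to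
`o(vol B_r)`. All values are therefore asymptotic to the average over a fundamental domain, and that
average is exactly `vol B_r / covol L * ∫ f`.
-/

namespace DenseComb

open Filter Asymptotics Bornology Topology Module
open scoped ENNReal

section Packing

variable {X ι : Type*} [NormedAddCommGroup X]

lemma exists_two_mul_le_dist (L : Submodule ℤ X) [DiscreteTopology L] :
    ∃ δ : ℝ, 0 < δ ∧ δ ≤ 1 ∧ Pairwise fun p q : L => 2 * δ ≤ dist p q := by
  obtain ⟨ε, hε, hball⟩ := Metric.mem_nhds_iff.1 ((isOpen_discrete {(0 : L)}).mem_nhds rfl)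
  refine ⟨min 1 (ε / 2), by positivity, min_le_left _ _, fun p q hpq => ?_⟩
  have hdist : ε ≤ dist p q := by
    by_contra! hlt
    rw [dist_eq_norm, ← dist_zero_right] at hlt
    exact hpq (sub_eq_zero.1 (hball hlt))
  linarith [min_le_right 1 (ε / 2)]

lemma tsum_le_inv_measure_ball_mul_lintegral [ProperSpace X] [MeasurableSpace X] [BorelSpace X]
    (μ : Measure X) [μ.IsAddHaarMeasure] [Countable ι] {x : ι → X} {δ : ℝ} (hδ : 0 < δ)
    (hx : Pairwise fun i j => 2 * δ ≤ dist (x i) (x j)) {g h : X → ℝ≥0∞}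
    (hgh : ∀ y z, dist z y < δ → g y ≤ h z) :
    ∑' i, g (x i) ≤ (μ (ball 0 δ))⁻¹ * ∫⁻ z, h z ∂μ := by
  have hdisj : Pairwise (Function.onFun Disjoint fun i => ball (x i) δ) := fun i j hij =>
    ball_disjoint_ball (by linarith [hx hij])
  rw [← ENNReal.mul_le_iff_le_inv (measure_ball_pos μ 0 hδ).ne' measure_ball_lt_top.ne,
    ← ENNReal.tsum_mul_left]
  calc ∑' i, μ (ball 0 δ) * g (x i)
      ≤ ∑' i, ∫⁻ z in ball (x i) δ, h z ∂μ := ENNReal.tsum_le_tsum fun i => by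
        rw [← Measure.addHaar_ball_center μ (x i), mul_comm, ← setLIntegral_const]
        exact setLIntegral_mono' measurableSet_ball fun z hz => hgh _ _ hz
    _ = ∫⁻ z in ⋃ i, ball (x i) δ, h z ∂μ :=
        (lintegral_iUnion (fun _ => measurableSet_ball) hdisj h).symm
    _ ≤ ∫⁻ z, h z ∂μ := setLIntegral_le_lintegral _ _

end Packing

section Balls

lemma thickening_closedBall_subset {X : Type*} [PseudoMetricSpace X] (x : X) (r δ : ℝ) :
    thickening δ (closedBall x r) ⊆ closedBall x (r + δ) := by
  intro z hz
  obtain ⟨y, hy, hzy⟩ := mem_thickening_iff.1 hz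
  rw [mem_closedBall] at hy ⊢
  linarith [dist_triangle z y x]

lemma thickening_closedBall_sdiff_subset {X : Type*} [PseudoMetricSpace X] (x : X) (r ρ δ : ℝ) :
    thickening δ (closedBall x r \ closedBall x ρ) ⊆
      closedBall x (r + δ) \ closedBall x (ρ - δ) := by
  intro z hz
  have hzr := thickening_subset_of_subset δ Set.sdiff_subset hz
  refine ⟨thickening_closedBall_subset x r δ hzr, ?_⟩
  obtain ⟨y, ⟨-, hy⟩, hzy⟩ := mem_thickening_iff.1 hz
  rw [mem_closedBall, not_le] at hy ⊢
  linarith [dist_triangle_left y x z]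

lemma eventually_measureReal_closedBall_pos {X : Type*} [PseudoMetricSpace X] [ProperSpace X]
    [MeasurableSpace X] (μ : Measure X) [μ.IsOpenPosMeasure] [IsFiniteMeasureOnCompacts μ] (x : X) :
    ∀ᶠ r in atTop, 0 < μ.real (closedBall x r) :=
  (eventually_gt_atTop 0).mono fun _ hr =>
    ENNReal.toReal_pos (measure_closedBall_pos μ x hr).ne' measure_closedBall_lt_top.ne

variable {E : Type*} [NormedAddCommGroup E] [NormedSpace ℝ E] [FiniteDimensional ℝ E]
  [MeasurableSpace E] [BorelSpace E] (μ : Measure E) [μ.IsAddHaarMeasure] (x : E)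

lemma isEquivalent_measureReal_closedBall_add (b : ℝ) :
    (fun r => μ.real (closedBall x (r + b))) ~[atTop] fun r => μ.real (closedBall x r) := by
  refine isEquivalent_of_tendsto_one ?_
  have hlim : Tendsto (fun r : ℝ => (1 + b / r) ^ finrank ℝ E) atTop (𝓝 1) := by
    simpa using (((tendsto_const_nhds (x := b)).div_atTop tendsto_id).const_add 1).pow (finrank ℝ E)
  refine hlim.congr' ?_
  filter_upwards [eventually_gt_atTop 0, eventually_ge_atTop (-b)] with r hr hrb
  have hball : 0 < μ.real (ball (0 : E) 1) :=
    ENNReal.toReal_pos (measure_ball_pos μ 0 one_pos).ne' measure_ball_lt_top.ne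
  rw [Pi.div_apply, Measure.addHaar_real_closedBall μ x hr.le,
    Measure.addHaar_real_closedBall μ x (by linarith), mul_div_mul_right _ _ hball.ne', ← div_pow,
    add_div, div_self hr.ne']

lemma eventually_measureReal_closedBall_add_le (b : ℝ) :
    ∀ᶠ r in atTop, μ.real (closedBall x (r + b)) ≤ 2 * μ.real (closedBall x r) := by
  filter_upwards [isLittleO_iff.1 (isEquivalent_measureReal_closedBall_add μ x b).isLittleO
    one_pos] with r hr
  rw [Pi.sub_apply, one_mul, Real.norm_of_nonneg measureReal_nonneg] at hr
  linarith [(Real.le_norm_self _).trans hr]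

lemma isLittleO_measureReal_closedBall_sdiff {b : ℝ} (hb : 0 ≤ b) :
    (fun r => μ.real (closedBall x (r + b) \ closedBall x (r - b))) =o[atTop]
      fun r => μ.real (closedBall x r) := by
  have hdiff (r : ℝ) : μ.real (closedBall x (r + b) \ closedBall x (r - b)) =
      μ.real (closedBall x (r + b)) - μ.real (closedBall x (r + -b)) := by
    rw [← sub_eq_add_neg, measureReal_sdiff (closedBall_subset_closedBall (by linarith))
      measurableSet_closedBall measure_closedBall_lt_top.ne]
  simp only [hdiff]
  refine ((isEquivalent_measureReal_closedBall_add μ x b).isLittleO.sub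
    (isEquivalent_measureReal_closedBall_add μ x (-b)).isLittleO).congr_left fun r => ?_
  simp only [Pi.sub_apply, sub_sub_sub_cancel_right]

end Balls

section DecayWeight

variable {F V : Type*} [NormedAddCommGroup F] [NormedAddCommGroup V]

/-- The weight `y ↦ (1 + ‖y‖) ^ (-s)` against which decay at infinity is measured; unlike
`‖y‖ ^ (-s)` it is continuous and bounded. -/
noncomputable def decayWeight (s : ℝ) (y : F) : ℝ := (1 + ‖y‖) ^ (-s)

lemma decayWeight_pos (s : ℝ) (y : F) : 0 < decayWeight s y :=
  Real.rpow_pos_of_pos (by positivity) _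

lemma decayWeight_le_of_dist_le_one {s : ℝ} (hs : 0 ≤ s) {y z : F} (hyz : dist z y ≤ 1) :
    decayWeight s y ≤ 2 ^ s * decayWeight s z := by
  have hnorm : ‖z‖ ≤ ‖y‖ + 1 := by
    linarith [norm_le_norm_add_norm_sub y z, dist_eq_norm' z y]
  have hle : 1 + ‖z‖ ≤ 2 * (1 + ‖y‖) := by linarith [norm_nonneg y]
  have hrpow : (1 + ‖z‖) ^ s ≤ 2 ^ s * (1 + ‖y‖) ^ s := by
    rw [← Real.mul_rpow zero_le_two (by positivity)]
    exact Real.rpow_le_rpow (by positivity) hle hs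
  rw [decayWeight, decayWeight, Real.rpow_neg (by positivity), Real.rpow_neg (by positivity),
    ← div_eq_mul_inv, ← one_div, div_le_div_iff₀ (by positivity) (by positivity), one_mul]
  exact hrpow

lemma decayWeight_rpow (s θ : ℝ) (y : F) : decayWeight s y ^ θ = decayWeight (s * θ) y := by
  rw [decayWeight, decayWeight, ← Real.rpow_mul (by positivity), neg_mul]

lemma tendsto_decayWeight_cocompact [ProperSpace F] {s : ℝ} (hs : 0 < s) :
    Tendsto (decayWeight s : F → ℝ) (cocompact F) (𝓝 0) :=
  (tendsto_rpow_neg_atTop hs).comp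
    (tendsto_atTop_add_const_left _ 1 (tendsto_norm_cocompact_atTop (E := F)))

lemma continuous_decayWeight (s : ℝ) : Continuous (decayWeight s : F → ℝ) :=
  (continuous_const.add continuous_norm).rpow_const fun y =>
    Or.inl (by positivity : (0 : ℝ) < 1 + ‖y‖).ne'

lemma exists_pos_norm_le_mul_decayWeight {s : ℝ} {f : F → V} (hf : f =O[⊤] decayWeight s) :
    ∃ M, 0 < M ∧ ∀ y, ‖f y‖ ≤ M * decayWeight s y := by
  obtain ⟨M, hM, hfM⟩ := hf.exists_pos
  refine ⟨M, hM, fun y => ?_⟩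
  simpa only [Real.norm_of_nonneg (decayWeight_pos s y).le] using isBigOWith_top.1 hfM y

lemma isBigO_decayWeight_of_rpow_mul_norm_le [ProperSpace F] {f : F → V} (hf : Continuous f)
    {C s : ℝ} (hs : 0 ≤ s) (hdecay : ∀ y, ‖y‖ ^ s * ‖f y‖ ≤ C) : f =O[⊤] decayWeight s := by
  obtain ⟨M, hM⟩ := (isCompact_closedBall (0 : F) 1).exists_bound_of_continuousOn hf.continuousOn
  refine .of_bound (2 ^ s * max M C) (eventually_top.2 fun y => ?_)
  have hle : ‖f y‖ * (max 1 ‖y‖) ^ s ≤ max M C := by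
    rcases le_total ‖y‖ 1 with hy | hy
    · rw [max_eq_left hy, Real.one_rpow, mul_one]
      exact (hM y (mem_closedBall_zero_iff.2 hy)).trans (le_max_left _ _)
    · rw [max_eq_right hy, mul_comm]
      exact (hdecay y).trans (le_max_right _ _)
  have hmax : (1 + ‖y‖) ^ s ≤ 2 ^ s * (max 1 ‖y‖) ^ s := by
    rw [← Real.mul_rpow zero_le_two (by positivity)]
    exact Real.rpow_le_rpow (by positivity)
      (by linarith [le_max_left 1 ‖y‖, le_max_right 1 ‖y‖]) hs
  rw [Real.norm_of_nonneg (decayWeight_pos s y).le, decayWeight, Real.rpow_neg (by positivity),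
    ← div_eq_mul_inv, le_div_iff₀ (by positivity)]
  calc ‖f y‖ * (1 + ‖y‖) ^ s ≤ ‖f y‖ * (2 ^ s * (max 1 ‖y‖) ^ s) := by gcongr
    _ = 2 ^ s * (‖f y‖ * (max 1 ‖y‖) ^ s) := by ring
    _ ≤ 2 ^ s * max M C := by gcongr

lemma uniformContinuous_of_isBigO_decayWeight [ProperSpace F] {f : F → V} (hf : Continuous f)
    {s : ℝ} (hs : 0 < s) (hfO : f =O[⊤] decayWeight s) : UniformContinuous f :=
  hf.uniformContinuous_of_tendsto_cocompact
    ((hfO.mono le_top).trans_tendsto (tendsto_decayWeight_cocompact hs))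

/-- The increment is uniformly small and is also bounded by a multiple of `decayWeight s`; a
geometric mean of the two bounds makes it small relative to `decayWeight s'`. -/
lemma exists_norm_add_sub_le_mul_decayWeight [ProperSpace F] {f : F → V} (hf : Continuous f)
    {s s' : ℝ} (hs' : 0 < s') (hss' : s' < s) (hfO : f =O[⊤] decayWeight s) {ε : ℝ}
    (hε : 0 < ε) :
    ∃ η > 0, ∀ t y, ‖t‖ < η → ‖f (y + t) - f y‖ ≤ ε * decayWeight s' y := by
  have hs : 0 < s := hs'.trans hss'
  obtain ⟨M, hM, hfM⟩ := exists_pos_norm_le_mul_decayWeight hfO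
  set θ := s' / s with hθ
  set B := M * (2 ^ s + 1) with hB
  have hθ0 : 0 < θ := div_pos hs' hs
  have hθ1 : 0 < 1 - θ := sub_pos.2 ((div_lt_one hs).2 hss')
  have hB0 : 0 < B ^ θ := by positivity
  obtain ⟨η, hη, hunif⟩ := Metric.uniformContinuous_iff.1
    (uniformContinuous_of_isBigO_decayWeight hf hs hfO) ((ε / B ^ θ) ^ (1 - θ)⁻¹) (by positivity)
  refine ⟨min η 1, by positivity, fun t y ht => ?_⟩
  have hsmall : ‖f (y + t) - f y‖ ≤ (ε / B ^ θ) ^ (1 - θ)⁻¹ := by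
    rw [← dist_eq_norm]
    exact (hunif (by simpa using ht.trans_le (min_le_left _ _))).le
  have hdecay : ‖f (y + t) - f y‖ ≤ B * decayWeight s y := by
    have hw : decayWeight s (y + t) ≤ 2 ^ s * decayWeight s y :=
      decayWeight_le_of_dist_le_one hs.le (by simpa using (ht.trans_le (min_le_right _ _)).le)
    calc ‖f (y + t) - f y‖ ≤ ‖f (y + t)‖ + ‖f y‖ := norm_sub_le _ _
      _ ≤ M * (2 ^ s * decayWeight s y) + M * decayWeight s y :=
          add_le_add ((hfM _).trans (by gcongr)) (hfM y)
      _ = B * decayWeight s y := by rw [hB]; ring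
  have hw0 := (decayWeight_pos s y).le
  calc ‖f (y + t) - f y‖ = ‖f (y + t) - f y‖ ^ (1 - θ) * ‖f (y + t) - f y‖ ^ θ := by
        rw [← Real.rpow_add_of_nonneg (norm_nonneg _) hθ1.le hθ0.le, sub_add_cancel,
          Real.rpow_one]
    _ ≤ ((ε / B ^ θ) ^ (1 - θ)⁻¹) ^ (1 - θ) * (B * decayWeight s y) ^ θ := by gcongr
    _ = ε * decayWeight s' y := by
        rw [Real.rpow_inv_rpow (by positivity) hθ1.ne', Real.mul_rpow (by positivity) hw0,
          decayWeight_rpow, hθ, mul_div_cancel₀ _ hs.ne', ← hθ]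
        field_simp

end DecayWeight

section Periodization

variable {X V : Type*}

/-- The periodization `v ↦ ∑ p ∈ L, g (p + v)` of `g` over `L`, as a function on the whole space
rather than on the quotient. Where the sum does not converge the value is `0`. -/
noncomputable def periodization [AddCommGroup X] [AddCommMonoid V] [TopologicalSpace V]
    (L : Submodule ℤ X) (g : X → V) (v : X) : V :=
  ∑' p : L, g (p + v)

lemma periodization_sub_mem [AddCommGroup X] [AddCommMonoid V] [TopologicalSpace V]
    {L : Submodule ℤ X} (g : X → V) (v : X) {q : X} (hq : q ∈ L) :
    periodization L g (v - q) = periodization L g v := by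
  rw [periodization, ← (Equiv.addRight (⟨q, hq⟩ : L)).tsum_eq fun p : L => g (p + (v - q))]
  simp only [Equiv.coe_addRight, Submodule.coe_add, add_assoc, add_sub_cancel, periodization]

lemma periodization_add_sub [AddCommGroup X] [AddCommGroup V] [TopologicalSpace V]
    [IsTopologicalAddGroup V] [T2Space V] {L : Submodule ℤ X} {g : X → V} {u v : X}
    (huv : Summable fun p : L => g (p + (v + u))) (hv : Summable fun p : L => g (p + v)) :
    periodization L g (v + u) - periodization L g v =
      periodization L (fun z => g (z + u) - g z) v := by
  simp only [periodization, ← huv.tsum_sub hv, add_assoc]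

variable [NormedAddCommGroup X] [MeasurableSpace X] [BorelSpace X]
  {L : Submodule ℤ X} [Countable L] {μ : Measure X} [μ.IsAddLeftInvariant] {D : Set X}
  [NormedAddCommGroup V] {g : X → V}

lemma aestronglyMeasurable_periodization (hg : AEStronglyMeasurable g μ)
    (hsum : ∀ v, Summable fun p : L => g (p + v)) :
    AEStronglyMeasurable (periodization L g) μ :=
  aestronglyMeasurable_of_tendsto_ae (atTop : Filter (Finset L))
    (fun s => Finset.aestronglyMeasurable_fun_sum s fun p _ =>
      hg.comp_measurePreserving (measurePreserving_add_left μ (p : X)))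
    (Eventually.of_forall fun v => (hsum v).hasSum)

lemma setIntegral_periodization [NormedSpace ℝ V] (hD : IsAddFundamentalDomain L D μ)
    (hg : Integrable g μ) :
    ∫ v in D, periodization L g v ∂μ = ∫ z, g z ∂μ := by
  have : MeasurableConstVAdd L X := (inferInstance : MeasurableConstVAdd L.toAddSubgroup X)
  have : VAddInvariantMeasure L X μ := (inferInstance : VAddInvariantMeasure L.toAddSubgroup X μ)
  have hfin : ∑' p : L, ∫⁻ v in D, ‖g (p + v)‖ₑ ∂μ ≠ ⊤ := by
    exact hD.lintegral_eq_tsum'' (fun z => ‖g z‖ₑ) ▸ hg.2.ne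
  rw [hD.integral_eq_tsum'' _ hg]
  exact integral_tsum (fun p => (hg.comp_add_left (p : X)).aestronglyMeasurable.restrict) hfin

end Periodization

section CylinderFun

variable {E F V : Type*}

/-- The function `(x, y) ↦ 1_A(x) f(y)`, whose sum over a cut-and-project lattice is the mass that
the comb with weights `f` gives to `A`. -/
noncomputable def cylinderFun [Zero V] (A : Set E) (f : F → V) : E × F → V :=
  fun z => A.indicator (fun _ => f z.2) z.1

lemma cylinderFun_of_mem [Zero V] {A : Set E} (f : F → V) {z : E × F} (hz : z.1 ∈ A) :
    cylinderFun A f z = f z.2 :=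
  Set.indicator_of_mem hz _

lemma cylinderFun_of_notMem [Zero V] {A : Set E} (f : F → V) {z : E × F} (hz : z.1 ∉ A) :
    cylinderFun A f z = 0 :=
  Set.indicator_of_notMem hz _

lemma cylinderFun_eq_smul [AddCommGroup V] [Module ℝ V] (A : Set E) (f : F → V) :
    cylinderFun A f = fun z => A.indicator (1 : E → ℝ) z.1 • f z.2 := by
  ext z
  by_cases hz : z.1 ∈ A
  · rw [cylinderFun_of_mem f hz, Set.indicator_of_mem hz, Pi.one_apply, one_smul]
  · rw [cylinderFun_of_notMem f hz, Set.indicator_of_notMem hz, zero_smul]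

lemma cylinderFun_add_snd_sub [AddGroup E] [AddGroup F] [AddGroup V] (A : Set E) (f : F → V)
    (t : F) (z : E × F) :
    cylinderFun A f (z + (0, t)) - cylinderFun A f z =
      cylinderFun A (fun y => f (y + t) - f y) z := by
  by_cases hz : z.1 ∈ A
  · rw [cylinderFun_of_mem _ hz, cylinderFun_of_mem _ hz, cylinderFun_of_mem _ (by simpa using hz),
      Prod.snd_add]
  · rw [cylinderFun_of_notMem _ hz, cylinderFun_of_notMem _ hz,
      cylinderFun_of_notMem _ (by simpa using hz), sub_zero]

lemma norm_cylinderFun_le [NormedAddCommGroup V] (A : Set E) {f : F → V} {c : ℝ} {w : F → ℝ}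
    (hf : ∀ y, ‖f y‖ ≤ c * w y) (z : E × F) : ‖cylinderFun A f z‖ ≤ c * cylinderFun A w z := by
  by_cases hz : z.1 ∈ A
  · rw [cylinderFun_of_mem f hz, cylinderFun_of_mem w hz]
    exact hf z.2
  · rw [cylinderFun_of_notMem f hz, cylinderFun_of_notMem w hz, norm_zero, mul_zero]

lemma norm_cylinderFun_closedBall_add_fst_sub_le [NormedAddCommGroup E] [AddGroup F]
    [NormedAddCommGroup V] {f : F → V} {c : ℝ} {w : F → ℝ} (hf : ∀ y, ‖f y‖ ≤ c * w y) (r : ℝ)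
    (a : E) (z : E × F) :
    ‖cylinderFun (closedBall 0 r) f (z + (a, 0)) - cylinderFun (closedBall 0 r) f z‖ ≤
      c * cylinderFun (closedBall 0 (r + ‖a‖) \ closedBall 0 (r - ‖a‖)) w z := by
  have hadd : ‖z.1 + a‖ ≤ ‖z.1‖ + ‖a‖ := norm_add_le _ _
  have hsub : ‖z.1‖ ≤ ‖z.1 + a‖ + ‖a‖ := norm_le_add_norm_add _ _
  have hdiff : cylinderFun (closedBall 0 r) f (z + (a, 0)) - cylinderFun (closedBall 0 r) f z =
      (if ‖z.1 + a‖ ≤ r then f z.2 else 0) - if ‖z.1‖ ≤ r then f z.2 else 0 := by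
    simp [cylinderFun, Set.indicator]
  have hw : 0 ≤ c * w z.2 := (norm_nonneg _).trans (hf z.2)
  rw [hdiff]
  by_cases hz : z.1 ∈ closedBall 0 (r + ‖a‖) \ closedBall 0 (r - ‖a‖)
  · rw [cylinderFun_of_mem w hz]
    split_ifs <;> simp [hf, hw]
  · have hiff : ‖z.1 + a‖ ≤ r ↔ ‖z.1‖ ≤ r := by
      rw [Set.mem_sdiff, mem_closedBall_zero_iff, mem_closedBall_zero_iff, not_and_not_right] at hz
      exact ⟨fun h => by linarith [hz (by linarith)], fun h => by linarith [hz (by linarith)]⟩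
    simp only [hiff, sub_self, norm_zero, cylinderFun_of_notMem w hz, mul_zero, le_refl]

variable [NormedAddCommGroup V] [NormedSpace ℝ V] [MeasurableSpace E] [MeasurableSpace F]
  {μ : Measure E} {ν : Measure F}

lemma integrable_cylinderFun {A : Set E} (hA : MeasurableSet A) (hμA : μ A ≠ ⊤) {f : F → V}
    (hf : Integrable f ν) : Integrable (cylinderFun A f) (μ.prod ν) := by
  rw [cylinderFun_eq_smul]
  exact ((integrable_indicator_iff hA).2 (integrableOn_const hμA)).smul_prod hf

lemma integral_cylinderFun [SFinite μ] [SFinite ν] {A : Set E} (hA : MeasurableSet A) (f : F → V) :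
    ∫ z, cylinderFun A f z ∂μ.prod ν = μ.real A • ∫ y, f y ∂ν := by
  rw [cylinderFun_eq_smul, integral_prod_smul, integral_indicator_one hA]

end CylinderFun

section CountingBound

variable {E F V : Type*} [NormedAddCommGroup E] [NormedSpace ℝ E] [FiniteDimensional ℝ E]
  [MeasurableSpace E] [BorelSpace E] {μ : Measure E} [μ.IsAddHaarMeasure]
  [NormedAddCommGroup F] [NormedSpace ℝ F] [FiniteDimensional ℝ F] {s : ℝ}

lemma tsum_cylinderFun_decayWeight_le [MeasurableSpace F] [BorelSpace F] (ν : Measure F)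
    [ν.IsAddHaarMeasure] {ι : Type*} [Countable ι] {x : ι → E × F} {δ : ℝ} (hδ : 0 < δ)
    (hδ1 : δ ≤ 1) (hx : Pairwise fun i j => 2 * δ ≤ dist (x i) (x j)) (hs : 0 ≤ s) (A : Set E) :
    ∑' i, ENNReal.ofReal (cylinderFun A (decayWeight s) (x i)) ≤
      ((μ.prod ν) (ball 0 δ))⁻¹ *
        (μ (thickening 1 A) * ∫⁻ y, ENNReal.ofReal (2 ^ s * decayWeight s y) ∂ν) := by
  have hmajorant (y z : E × F) (hzy : dist z y < δ) :
      ENNReal.ofReal (cylinderFun A (decayWeight s) y) ≤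
        (thickening 1 A).indicator 1 z.1 * ENNReal.ofReal (2 ^ s * decayWeight s z.2) := by
    obtain ⟨hfst, hsnd⟩ := max_lt_iff.1 (Prod.dist_eq.symm.trans_lt (hzy.trans_le hδ1))
    by_cases hy : y.1 ∈ A
    · rw [cylinderFun_of_mem _ hy, Set.indicator_of_mem (mem_thickening_iff.2 ⟨y.1, hy, hfst⟩),
        Pi.one_apply, one_mul]
      exact ENNReal.ofReal_le_ofReal (decayWeight_le_of_dist_le_one hs hsnd.le)
    · rw [cylinderFun_of_notMem _ hy, ENNReal.ofReal_zero]
      exact zero_le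
  refine (tsum_le_inv_measure_ball_mul_lintegral (μ.prod ν) hδ hx
    (g := fun z => ENNReal.ofReal (cylinderFun A (decayWeight s) z)) hmajorant).trans_eq ?_
  rw [lintegral_prod_mul (f := (thickening 1 A).indicator 1)
    (measurable_one.indicator isOpen_thickening.measurableSet).aemeasurable
    ((continuous_decayWeight s).const_mul _).measurable.ennreal_ofReal.aemeasurable,
    lintegral_indicator_one isOpen_thickening.measurableSet]

variable (μ) in
lemma exists_summable_and_periodization_cylinderFun_decayWeight_le
    (L : Submodule ℤ (E × F)) [DiscreteTopology L] (hs : finrank ℝ F < s) :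
    ∃ K > 0, ∀ (A : Set E) (v : E × F), IsBounded A →
      (Summable fun p : L => cylinderFun A (decayWeight s) ((p : E × F) + v)) ∧
        periodization L (cylinderFun A (decayWeight s)) v ≤ K * μ.real (thickening 1 A) := by
  have : Countable L := TopologicalSpace.separableSpace_iff_countable.1 inferInstance
  borelize F
  let ν : Measure F := Measure.addHaar
  obtain ⟨δ, hδ, hδ1, hL⟩ := exists_two_mul_le_dist L
  set κ : ℝ≥0∞ := ((μ.prod ν) (ball 0 δ))⁻¹ *
    ∫⁻ y, ENNReal.ofReal (2 ^ s * decayWeight s y) ∂ν with hκ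
  have hκ_top : κ ≠ ⊤ :=
    ENNReal.mul_ne_top (ENNReal.inv_ne_top.2 (measure_ball_pos _ 0 hδ).ne')
      ((integrable_one_add_norm hs).const_mul _).lintegral_lt_top.ne
  refine ⟨κ.toReal + 1, by positivity, fun A v hA => ?_⟩
  have hw0 (z : E × F) : 0 ≤ cylinderFun A (decayWeight s) z :=
    Set.indicator_nonneg (fun _ _ => (decayWeight_pos s z.2).le) z.1
  have hle : ∑' p : L, ENNReal.ofReal (cylinderFun A (decayWeight s) ((p : E × F) + v)) ≤
      κ * μ (thickening 1 A) := by
    rw [hκ, mul_assoc, mul_comm (∫⁻ _, _ ∂ν)]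
    exact tsum_cylinderFun_decayWeight_le ν hδ hδ1
      (fun p q hpq => (hL hpq).trans_eq (dist_add_right (p : E × F) q v).symm)
      ((Nat.cast_nonneg _).trans hs.le) A
  have htop : κ * μ (thickening 1 A) ≠ ⊤ :=
    ENNReal.mul_ne_top hκ_top hA.thickening.measure_lt_top.ne
  have hsum : Summable fun p : L => cylinderFun A (decayWeight s) ((p : E × F) + v) := by
    simpa only [ENNReal.toReal_ofReal (hw0 _)] using
      ENNReal.summable_toReal (ne_top_of_le_ne_top htop hle)
  refine ⟨hsum, ?_⟩
  rw [← ENNReal.ofReal_tsum_of_nonneg (fun _ => hw0 _) hsum,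
    ENNReal.ofReal_le_iff_le_toReal htop, ENNReal.toReal_mul] at hle
  exact hle.trans (mul_le_mul_of_nonneg_right (le_add_of_nonneg_right zero_le_one)
    measureReal_nonneg)

variable (μ) in
lemma exists_summable_and_norm_periodization_le [NormedAddCommGroup V] [CompleteSpace V]
    (L : Submodule ℤ (E × F)) [DiscreteTopology L] (hs : finrank ℝ F < s) :
    ∃ K > 0, ∀ (A : Set E) (c : ℝ) (g : E × F → V) (v : E × F), IsBounded A → 0 ≤ c →
      (∀ z, ‖g z‖ ≤ c * cylinderFun A (decayWeight s) z) →
      (Summable fun p : L => g ((p : E × F) + v)) ∧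
        ‖periodization L g v‖ ≤ c * K * μ.real (thickening 1 A) := by
  obtain ⟨K, hK, hbound⟩ := exists_summable_and_periodization_cylinderFun_decayWeight_le μ L hs
  refine ⟨K, hK, fun A c g v hA hc hg => ?_⟩
  obtain ⟨hsum, hle⟩ := hbound A v hA
  refine ⟨(hsum.mul_left c).of_norm_bounded fun p => hg _, ?_⟩
  calc ‖periodization L g v‖ ≤ c * periodization L (cylinderFun A (decayWeight s)) v :=
        tsum_of_norm_bounded (hsum.hasSum.mul_left c) fun p => hg _
    _ ≤ c * (K * μ.real (thickening 1 A)) := mul_le_mul_of_nonneg_left hle hc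
    _ = c * K * μ.real (thickening 1 A) := (mul_assoc _ _ _).symm

end CountingBound

section CombMass

variable {E F V : Type*} [NormedAddCommGroup E] [NormedAddCommGroup F] [NormedAddCommGroup V]

/-- The mass `ω_v(B_r)` that the comb with weights `f` attached to the translate `L + v` gives to
the closed ball of radius `r` about the origin. -/
noncomputable def combMass (L : Submodule ℤ (E × F)) (f : F → V) (r : ℝ) (v : E × F) : V :=
  periodization L (cylinderFun (closedBall 0 r) f) v

lemma tsum_fst_image_inter_closedBall_eq_combMass {L : Submodule ℤ (E × F)} {star : E → F}
    (hstar : ∀ p ∈ L, star p.1 = p.2) (f : F → V) (r : ℝ) :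
    ∑' x : ↥(Prod.fst '' (L : Set (E × F)) ∩ closedBall 0 r), f (star x) =
      combMass L f r 0 := by
  have hinj : Function.Injective fun p : L => (p : E × F).1 := fun p q hpq =>
    Subtype.ext (Prod.ext hpq
      ((hstar p p.2).symm.trans ((congrArg star hpq).trans (hstar q q.2))))
  rw [tsum_subtype _ fun x => f (star x), ← hinj.tsum_eq, combMass, periodization]
  · refine tsum_congr fun p => ?_
    have hp : (p : E × F).1 ∈ Prod.fst '' (L : Set (E × F)) := ⟨p, p.2, rfl⟩
    by_cases hr : (p : E × F).1 ∈ closedBall 0 r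
    · rw [add_zero, cylinderFun_of_mem f hr, Set.indicator_of_mem (Set.mem_inter hp hr),
        hstar p p.2]
    · rw [add_zero, cylinderFun_of_notMem f hr,
        Set.indicator_of_notMem fun h => hr (Set.mem_of_mem_inter_right h)]
  · intro x hx
    obtain ⟨p, hp, rfl⟩ := (Set.mem_of_indicator_ne_zero hx).1
    exact ⟨⟨p, hp⟩, rfl⟩

variable [NormedSpace ℝ E] [FiniteDimensional ℝ E] [MeasurableSpace E] [BorelSpace E]
  (μ : Measure E) [μ.IsAddHaarMeasure] [NormedSpace ℝ F] [FiniteDimensional ℝ F] [CompleteSpace V]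
  (L : Submodule ℤ (E × F)) [DiscreteTopology L] {f : F → V} {s : ℝ}

lemma exists_summable_and_norm_combMass_le (hs : finrank ℝ F < s) (hf : f =O[⊤] decayWeight s) :
    ∃ K > 0, ∀ r v, (Summable fun p : L => cylinderFun (closedBall 0 r) f ((p : E × F) + v)) ∧
      ‖combMass L f r v‖ ≤ K * μ.real (closedBall 0 (r + 1)) := by
  obtain ⟨M, hM, hfM⟩ := exists_pos_norm_le_mul_decayWeight hf
  obtain ⟨K, hK, hbound⟩ := exists_summable_and_norm_periodization_le (V := V) μ L hs
  refine ⟨M * K, by positivity, fun r v => ?_⟩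
  obtain ⟨hsum, hle⟩ := hbound (closedBall 0 r) M _ v isBounded_closedBall hM.le
    (norm_cylinderFun_le _ hfM)
  refine ⟨hsum, hle.trans (mul_le_mul_of_nonneg_left ?_ (by positivity))⟩
  exact measureReal_mono (thickening_closedBall_subset 0 r 1) measure_closedBall_lt_top.ne

lemma exists_eventually_norm_inv_smul_combMass_le [NormedSpace ℝ V]
    (hs : finrank ℝ F < s) (hfO : f =O[⊤] decayWeight s) :
    ∃ K, ∀ᶠ r in atTop, ∀ v, ‖(μ.real (closedBall 0 r))⁻¹ • combMass L f r v‖ ≤ K := by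
  obtain ⟨K, hK, hbound⟩ := exists_summable_and_norm_combMass_le μ L hs hfO
  refine ⟨2 * K, ?_⟩
  filter_upwards [eventually_measureReal_closedBall_add_le μ 0 1,
    eventually_measureReal_closedBall_pos μ 0] with r hvol hpos v
  rw [norm_smul, norm_inv, Real.norm_of_nonneg hpos.le, inv_mul_le_iff₀ hpos]
  calc ‖combMass L f r v‖ ≤ K * μ.real (closedBall 0 (r + 1)) := (hbound r v).2
    _ ≤ K * (2 * μ.real (closedBall 0 r)) := by gcongr
    _ = μ.real (closedBall 0 r) * (2 * K) := by ring

lemma isLittleO_combMass_add_fst_sub (hs : finrank ℝ F < s) (hf : f =O[⊤] decayWeight s)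
    (v : E × F) (a : E) :
    (fun r => combMass L f r (v + (a, 0)) - combMass L f r v) =o[atTop]
      fun r => μ.real (closedBall 0 r) := by
  obtain ⟨M, hM, hfM⟩ := exists_pos_norm_le_mul_decayWeight hf
  obtain ⟨K, hK, hbound⟩ := exists_summable_and_norm_periodization_le (V := V) μ L hs
  obtain ⟨_, -, hsum⟩ := exists_summable_and_norm_combMass_le μ L hs hf
  refine IsBigO.trans_isLittleO (.of_bound (M * K) (Eventually.of_forall fun r => ?_))
    (isLittleO_measureReal_closedBall_sdiff μ 0 (b := ‖a‖ + 1) (by positivity))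
  rw [combMass, combMass, periodization_add_sub (hsum r _).1 (hsum r _).1,
    Real.norm_of_nonneg measureReal_nonneg, ← add_assoc, ← sub_sub]
  refine (hbound _ M _ v (isBounded_closedBall.subset Set.sdiff_subset) hM.le
    (norm_cylinderFun_closedBall_add_fst_sub_le hfM r a)).2.trans
      (mul_le_mul_of_nonneg_left ?_ (by positivity))
  exact measureReal_mono (thickening_closedBall_sdiff_subset 0 _ _ 1)
    (measure_ne_top_of_subset Set.sdiff_subset measure_closedBall_lt_top.ne)

lemma exists_norm_combMass_add_snd_sub_le (hs : finrank ℝ F < s) (hf : Continuous f)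
    (hfO : f =O[⊤] decayWeight s) {ε : ℝ} (hε : 0 < ε) :
    ∃ η > 0, ∀ r v t, ‖t‖ < η →
      ‖combMass L f r (v + (0, t)) - combMass L f r v‖ ≤ ε * μ.real (closedBall 0 (r + 1)) := by
  obtain ⟨s', hs', hss'⟩ := exists_between hs
  obtain ⟨K, hK, hbound⟩ := exists_summable_and_norm_periodization_le (V := V) μ L hs'
  obtain ⟨_, -, hsum⟩ := exists_summable_and_norm_combMass_le μ L hs hfO
  obtain ⟨η, hη, hincr⟩ := exists_norm_add_sub_le_mul_decayWeight hf
    ((Nat.cast_nonneg _).trans_lt hs') hss' hfO (div_pos hε hK)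
  refine ⟨η, hη, fun r v t ht => ?_⟩
  rw [combMass, combMass, periodization_add_sub (hsum r _).1 (hsum r _).1]
  simp only [cylinderFun_add_snd_sub]
  refine (hbound (closedBall 0 r) _ _ v isBounded_closedBall (by positivity)
    (norm_cylinderFun_le _ fun y => hincr t y ht)).2.trans ?_
  rw [div_mul_cancel₀ _ hK.ne']
  exact mul_le_mul_of_nonneg_left
    (measureReal_mono (thickening_closedBall_subset 0 r 1) measure_closedBall_lt_top.ne) hε.le

lemma isLittleO_combMass_sub (hdense : Dense (Prod.snd '' (L : Set (E × F))))
    (hs : finrank ℝ F < s) (hf : Continuous f) (hfO : f =O[⊤] decayWeight s) (v w : E × F) :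
    (fun r => combMass L f r v - combMass L f r w) =o[atTop] fun r => μ.real (closedBall 0 r) := by
  refine isLittleO_iff.2 fun ε hε => ?_
  obtain ⟨η, hη, hsnd⟩ :=
    exists_norm_combMass_add_snd_sub_le μ L hs hf hfO (by positivity : 0 < ε / 4)
  obtain ⟨_, ⟨q, hq, rfl⟩, hqη⟩ := hdense.exists_dist_lt (v - w).2 hη
  set a := (v - w).1 - q.1
  set t := (v - w).2 - q.2
  have hv (r : ℝ) : combMass L f r v = combMass L f r (w + (0, t) + (a, 0)) := by
    rw [combMass, combMass, ← periodization_sub_mem _ v hq]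
    congr 1
    ext <;> simp [a, t] <;> abel
  filter_upwards [isLittleO_iff.1 (isLittleO_combMass_add_fst_sub μ L hs hfO (w + (0, t)) a)
    (half_pos hε), eventually_measureReal_closedBall_add_le μ 0 1] with r hfst hvol
  rw [Real.norm_of_nonneg measureReal_nonneg] at hfst ⊢
  rw [hv]
  calc ‖combMass L f r (w + (0, t) + (a, 0)) - combMass L f r w‖
      ≤ ε / 2 * μ.real (closedBall 0 r) + ε / 4 * μ.real (closedBall 0 (r + 1)) :=
        norm_sub_le_norm_sub_add_norm_sub _ _ _ |>.trans
          (add_le_add hfst (hsnd r w t (by rwa [← dist_eq_norm])))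
    _ ≤ ε / 2 * μ.real (closedBall 0 r) + ε / 4 * (2 * μ.real (closedBall 0 r)) := by gcongr
    _ = ε * μ.real (closedBall 0 r) := by ring

end CombMass

section Averaging

lemma tendsto_of_tendsto_sub_of_tendsto_integral {X ι V : Type*} [MeasurableSpace X]
    [NormedAddCommGroup V] [NormedSpace ℝ V] [CompleteSpace V] {κ : Measure X} [IsFiniteMeasure κ]
    [NeZero κ] {l : Filter ι} [l.IsCountablyGenerated] {φ : ι → X → V} {a : ι → V} {C : ℝ} {I : V}
    (hφ : ∀ i, Integrable (φ i) κ) (hbound : ∀ᶠ i in l, ∀ᵐ x ∂κ, ‖φ i x - a i‖ ≤ C)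
    (hlim : ∀ᵐ x ∂κ, Tendsto (fun i => φ i x - a i) l (𝓝 0))
    (hint : Tendsto (fun i => ∫ x, φ i x ∂κ) l (𝓝 I)) :
    Tendsto a l (𝓝 ((κ.real Set.univ)⁻¹ • I)) := by
  have hdiff : Tendsto (fun i => ∫ x, φ i x - a i ∂κ) l (𝓝 0) := by
    rw [← integral_zero X V (μ := κ)]
    exact tendsto_integral_filter_of_dominated_convergence (fun _ => C)
      (Eventually.of_forall fun i => ((hφ i).sub (integrable_const _)).aestronglyMeasurable)
      hbound (integrable_const C) hlim
  have ha (i : ι) : a i = (κ.real Set.univ)⁻¹ • (∫ x, φ i x ∂κ - ∫ x, φ i x - a i ∂κ) := by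
    rw [integral_sub (hφ i) (integrable_const _), integral_const, sub_sub_cancel,
      inv_smul_smul₀ measureReal_univ_ne_zero]
  simpa only [← ha, sub_zero] using (hint.sub hdiff).const_smul (κ.real Set.univ)⁻¹

end Averaging

section Density

variable {E F V : Type*} [NormedAddCommGroup E] [NormedSpace ℝ E] [FiniteDimensional ℝ E]
  [MeasurableSpace E] [BorelSpace E] (μ : Measure E) [μ.IsAddHaarMeasure]
  [NormedAddCommGroup F] [NormedSpace ℝ F] [FiniteDimensional ℝ F]
  [MeasurableSpace F] [BorelSpace F] [NormedAddCommGroup V] {f : F → V} {s : ℝ}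

lemma integrable_of_isBigO_decayWeight {ν : Measure F} [ν.IsAddHaarMeasure]
    (hs : finrank ℝ F < s) (hf : AEStronglyMeasurable f ν) (hfO : f =O[⊤] decayWeight s) :
    Integrable f ν := by
  obtain ⟨M, -, hfM⟩ := exists_pos_norm_le_mul_decayWeight hfO
  exact ((integrable_one_add_norm hs).const_mul M).mono' hf (Eventually.of_forall hfM)

variable [NormedSpace ℝ V] (L : Submodule ℤ (E × F)) [DiscreteTopology L]

lemma setIntegral_combMass {ν : Measure F} [ν.IsAddHaarMeasure] {D : Set (E × F)}
    (hD : IsAddFundamentalDomain L D (μ.prod ν)) (hf : Integrable f ν) (r : ℝ) :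
    ∫ v in D, combMass L f r v ∂μ.prod ν = μ.real (closedBall 0 r) • ∫ y, f y ∂ν := by
  have : Countable L := TopologicalSpace.separableSpace_iff_countable.1 inferInstance
  exact (setIntegral_periodization hD (integrable_cylinderFun measurableSet_closedBall
    measure_closedBall_lt_top.ne hf)).trans (integral_cylinderFun measurableSet_closedBall f)

variable [CompleteSpace V]

lemma integrableOn_combMass (hs : finrank ℝ F < s) (hf : Continuous f)
    (hfO : f =O[⊤] decayWeight s) {ν : Measure F} [ν.IsAddHaarMeasure] {D : Set (E × F)}
    (hD : (μ.prod ν) D ≠ ⊤) (r : ℝ) : IntegrableOn (combMass L f r) D (μ.prod ν) := by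
  have : Countable L := TopologicalSpace.separableSpace_iff_countable.1 inferInstance
  obtain ⟨K, -, hK⟩ := exists_summable_and_norm_combMass_le μ L hs hfO
  have hint : Integrable (cylinderFun (closedBall 0 r) f) (μ.prod ν) :=
    integrable_cylinderFun measurableSet_closedBall measure_closedBall_lt_top.ne
      (integrable_of_isBigO_decayWeight hs hf.aestronglyMeasurable hfO)
  have hmeas : AEStronglyMeasurable (combMass L f r) (μ.prod ν) :=
    aestronglyMeasurable_periodization hint.aestronglyMeasurable fun v => (hK r v).1
  exact .of_bound hD.lt_top hmeas.restrict _ (Eventually.of_forall fun v => (hK r v).2)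

lemma tendsto_inv_smul_combMass [IsZLattice ℝ L] (hdense : Dense (Prod.snd '' (L : Set (E × F))))
    (hs : finrank ℝ F < s) (hf : Continuous f) (hfO : f =O[⊤] decayWeight s) (ν : Measure F)
    [ν.IsAddHaarMeasure] (v : E × F) :
    Tendsto (fun r => (μ.real (closedBall 0 r))⁻¹ • combMass L f r v) atTop
      (𝓝 ((ZLattice.covolume L (μ.prod ν))⁻¹ • ∫ y, f y ∂ν)) := by
  let D := ZSpan.fundamentalDomain ((Module.Free.chooseBasis ℤ L).ofZLatticeBasis ℝ L)
  have hD : IsAddFundamentalDomain L D (μ.prod ν) := ZLattice.isAddFundamentalDomain _ _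
  have hD_top : (μ.prod ν) D ≠ ⊤ := (ZSpan.fundamentalDomain_isBounded _).measure_lt_top.ne
  have : IsFiniteMeasure ((μ.prod ν).restrict D) := isFiniteMeasure_restrict.2 hD_top
  have : NeZero ((μ.prod ν).restrict D) :=
    ⟨Measure.restrict_eq_zero.not.2 (ZSpan.measure_fundamentalDomain_ne_zero _)⟩
  obtain ⟨K, hK⟩ := exists_eventually_norm_inv_smul_combMass_le μ L hs hfO
  rw [ZLattice.covolume_eq_measure_fundamentalDomain L _ hD, ← measureReal_restrict_apply_univ]
  refine tendsto_of_tendsto_sub_of_tendsto_integral (C := K + K)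
    (φ := fun r z => (μ.real (closedBall 0 r))⁻¹ • combMass L f r z)
    (fun r => (integrableOn_combMass μ L hs hf hfO hD_top r).smul _) ?_ ?_ ?_
  · exact hK.mono fun r hr => Eventually.of_forall fun z => norm_sub_le_of_le (hr z) (hr v)
  · refine Eventually.of_forall fun z => ?_
    simpa only [smul_sub] using
      (isLittleO_combMass_sub μ L hdense hs hf hfO z v).tendsto_inv_smul_nhds_zero
  · refine tendsto_const_nhds.congr' ?_
    filter_upwards [eventually_measureReal_closedBall_pos μ 0] with r hr
    rw [integral_smul, setIntegral_combMass μ L hD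
      (integrable_of_isBigO_decayWeight hs hf.aestronglyMeasurable hfO), inv_smul_smul₀ hr.ne']

end Density

end DenseComb

theorem dense_comb_weighted_density_general {E F V : Type*}
    [NormedAddCommGroup E] [NormedSpace ℝ E] [FiniteDimensional ℝ E] [MeasurableSpace E]
    [BorelSpace E] (μ : Measure E) [μ.IsAddHaarMeasure]
    [NormedAddCommGroup F] [NormedSpace ℝ F] [FiniteDimensional ℝ F] [MeasurableSpace F]
    [BorelSpace F] (ν : Measure F) [ν.IsAddHaarMeasure]
    [NormedAddCommGroup V] [NormedSpace ℝ V] [CompleteSpace V]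
    (L : Submodule ℤ (E × F)) [DiscreteTopology L] [IsZLattice ℝ L]
    (hdense : Dense (Prod.snd '' (L : Set (E × F))))
    (star : E → F) (hstar : ∀ p ∈ L, star p.1 = p.2)
    (f : F → V) (hf : Continuous f) {C s : ℝ} (hs : Module.finrank ℝ F < s)
    (hdecay : ∀ y, ‖y‖ ^ s * ‖f y‖ ≤ C) :
    Filter.Tendsto
      (fun r => (μ.real (closedBall 0 r))⁻¹ •
        ∑' x : ↥(Prod.fst '' (L : Set (E × F)) ∩ closedBall 0 r), f (star x))
      Filter.atTop (nhds ((ZLattice.covolume L (μ.prod ν))⁻¹ • ∫ y, f y ∂ν)) := by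
  have hfO : f =O[⊤] DenseComb.decayWeight s :=
    DenseComb.isBigO_decayWeight_of_rpow_mul_norm_le hf ((Nat.cast_nonneg _).trans hs.le) hdecay
  simp only [DenseComb.tsum_fst_image_inter_closedBall_eq_combMass hstar]
  exact DenseComb.tendsto_inv_smul_combMass μ L hdense hs hf hfO ν 0

/-- existence of the weighted density ρ of the dense Dirac comb,
ρ = lim_r ω(B_r)/vol(B_r) = (1/|det L̃|) ∫ f. -/
theorem dense_comb_weighted_density (d m : ℕ)
    (L : Submodule ℤ (EuclideanSpace ℝ (Fin d) × EuclideanSpace ℝ (Fin m)))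
    [DiscreteTopology L] [IsZLattice ℝ L]
    (hinj1 : Set.InjOn Prod.fst (L : Set (EuclideanSpace ℝ (Fin d) × EuclideanSpace ℝ (Fin m))))
    (hdense1 : Dense (physL d m L))
    (hinj2 : Set.InjOn Prod.snd (L : Set (EuclideanSpace ℝ (Fin d) × EuclideanSpace ℝ (Fin m))))
    (hdense2 : Dense (Prod.snd '' (L : Set (EuclideanSpace ℝ (Fin d) × EuclideanSpace ℝ (Fin m)))))
    (star : EuclideanSpace ℝ (Fin d) → EuclideanSpace ℝ (Fin m))
    (hstar : ∀ p ∈ L, star (Prod.fst p) = Prod.snd p)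
    (f : EuclideanSpace ℝ (Fin m) → ℂ) (hf : Continuous f)
    (C α : ℝ) (hC : 0 < C) (hα : 0 < α)
    (hdecay : ∀ x : EuclideanSpace ℝ (Fin m), ‖x‖ ^ ((m : ℝ) + 1 + α) * ‖f x‖ ≤ C) :
    Filter.Tendsto
      (fun r : ℝ => (volume (closedBall (0 : EuclideanSpace ℝ (Fin d)) r)).toReal⁻¹ •
        (∑' x : ((physL d m L ∩ closedBall (0 : EuclideanSpace ℝ (Fin d)) r :
            Set (EuclideanSpace ℝ (Fin d)))), f (star (x : EuclideanSpace ℝ (Fin d)))))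
      Filter.atTop
      (nhds ((ZLattice.covolume L volume)⁻¹ • ∫ u, f u)) :=
  dense_comb_weighted_density_general volume volume L hdense2 star hstar f hf
    (by rw [finrank_euclideanSpace_fin]; linarith) hdecay
end
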